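/- arXiv:2112.10405 — 4 statements merged into one kernel-verified Lean document; each statement's English description precedes it below -/
import Mathlib

section
/- In the diffusive regime 0 < p < 3/4, the score-type martingale satisfies P_n/√(log n) → N(0, 1/(3 − 4p)) in distribution as n → ∞, i.e., the law of P_n/√(log n) converges weakly to the centered Gaussian distribution with variance 1/(3 − 4p). -/
open MeasureTheory ProbabilityTheory Filter Finset
open scoped BoundedContinuousFunction ENNReal NNReal Topology

noncomputable section

variable {Ω : Type*}

/-- Position of the elephant random walk: `S n = X 1 + ⋯ + X n`. -/
def erwS (X : ℕ → Ω → ℝ) (n : ℕ) (ω : Ω) : ℝ :=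
  ∑ k ∈ Finset.Icc 1 n, X k ω

/-- `V n = 4 ∑_{k=1}^{n-1} (S k / k)²`, the approximate conditional Fisher information. -/
def erwV (X : ℕ → Ω → ℝ) (n : ℕ) (ω : Ω) : ℝ :=
  4 * ∑ k ∈ Finset.Icc 1 (n - 1), (erwS X k ω / k) ^ 2

/-- The quasi-maximum likelihood estimator `p̂ n` of the memory parameter. -/
def erwPhat (X : ℕ → Ω → ℝ) (n : ℕ) (ω : Ω) : ℝ :=
  (∑ k ∈ Finset.Icc 1 (n - 1), (erwS X k ω / k) * (X (k + 1) ω + erwS X k ω / k)) /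
    (2 * ∑ k ∈ Finset.Icc 1 (n - 1), (erwS X k ω / k) ^ 2)

/-- The elephant random walk hypotheses with memory parameter `p ∈ [0,1]`:
the steps take values in `{-1, 1}`, are adapted to the filtration `ℱ`
(which plays the role of `σ(X_1, …, X_n)`), and
`E[X_{n+1} | ℱ_n] = (2p - 1) · S_n / n` almost surely. -/
def IsERW {m0 : MeasurableSpace Ω} (μ : Measure Ω) (ℱ : Filtration ℕ m0)
    (X : ℕ → Ω → ℝ) (p : ℝ) : Prop :=
  0 ≤ p ∧ p ≤ 1 ∧
  (∀ n, 1 ≤ n → ∀ ω, X n ω = 1 ∨ X n ω = -1) ∧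
  (∀ n, 1 ≤ n → Measurable[ℱ n] (X n)) ∧
  (∀ n, 1 ≤ n → μ[X (n + 1) | ℱ n] =ᵐ[μ] fun ω => (2 * p - 1) * (erwS X n ω / n))

/-- The score-type martingale `P n = ∑_{k=1}^{n-1} (S k / k) ε_{k+1} / (1 - a² (S k / k)²)`. -/
def erwP (X : ℕ → Ω → ℝ) (a : ℝ) (n : ℕ) (ω : Ω) : ℝ :=
  ∑ k ∈ Finset.Icc 1 (n - 1),
    (erwS X k ω / k) * (X (k + 1) ω - a * (erwS X k ω / k)) /
      (1 - a ^ 2 * (erwS X k ω / k) ^ 2)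

lemma aux_exp_I (x : ℝ) (hx : |x| ≤ 1) :
    ‖Complex.exp (x * Complex.I) - (1 + x * Complex.I - (x : ℂ) ^ 2 / 2)‖ ≤ |x| ^ 3 := by
  have hn : ‖(x : ℂ) * Complex.I‖ = |x| := by simp
  have h := Complex.exp_bound (x := (x : ℂ) * Complex.I) (by rw [hn]; exact hx) (n := 3) (by norm_num)
  rw [hn] at h
  have e : ∑ m ∈ range 3, ((x : ℂ) * Complex.I) ^ m / (m.factorial : ℂ)
      = 1 + x * Complex.I - (x : ℂ) ^ 2 / 2 := by
    simp [Finset.sum_range_succ, mul_pow, Nat.factorial]; ring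
  rw [e] at h
  refine h.trans ?_
  have : 0 ≤ |x| ^ 3 := by positivity
  norm_num [Nat.factorial]
  linarith

lemma aux_exp_quad (y : ℝ) (hy : 0 ≤ y) :
    |Real.exp y * (1 - y) - 1| ≤ Real.exp y * (y ^ 2) := by
  have h1 := Real.add_one_le_exp (-y)
  have h2 := Real.add_one_le_exp y
  have h3 : Real.exp y * Real.exp (-y) = 1 := by rw [← Real.exp_add]; simp
  have hp := Real.exp_pos y
  rw [abs_le]
  constructor
  · have h4 : 0 ≤ 1 - y + y ^ 2 := by nlinarith [sq_nonneg (y - 1 / 2)]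
    have h5 : (y + 1) * (1 - y + y ^ 2) = 1 + y ^ 3 := by ring
    have h6 : 0 ≤ y ^ 3 := by positivity
    nlinarith [mul_le_mul_of_nonneg_right h2 h4]
  · nlinarith [mul_nonneg hp.le (sq_nonneg y)]

lemma aux_integrable {E : Type*} [NormedAddCommGroup E] {m0 : MeasurableSpace Ω} (μ : Measure Ω)
    [IsProbabilityMeasure μ] (f : Ω → E) (hf : AEStronglyMeasurable f μ) (C : ℝ)
    (hC : ∀ ω, ‖f ω‖ ≤ C) :
    Integrable f μ := Integrable.of_bound hf C (Eventually.of_forall hC)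

/-- Quantitative comparison of the compensated characteristic function with `1`. -/
lemma aux_char {m0 : MeasurableSpace Ω} (μ : Measure Ω) [IsProbabilityMeasure μ]
    (ℱ : Filtration ℕ m0) (d w : ℕ → Ω → ℝ) (η K : ℝ) (hη0 : 0 ≤ η) (hη1 : η ≤ 1)
    (hd : ∀ k, Measurable[ℱ (k + 1)] (d k)) (hw : ∀ k, Measurable[ℱ k] (w k))
    (hdη : ∀ k ω, |d k ω| ≤ η) (hw0 : ∀ k ω, 0 ≤ w k ω) (hwη : ∀ k ω, w k ω ≤ η)
    (hK : ∀ n ω, ∑ k ∈ range n, w k ω ≤ K)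
    (h1 : ∀ k (g : Ω → ℂ), Measurable[ℱ k] g → (∃ C, ∀ ω, ‖g ω‖ ≤ C) →
      ∫ ω, g ω * (d k ω : ℂ) ∂μ = 0)
    (h2 : ∀ k (g : Ω → ℂ), Measurable[ℱ k] g → (∃ C, ∀ ω, ‖g ω‖ ≤ C) →
      ∫ ω, g ω * ((d k ω : ℂ) ^ 2 - (w k ω : ℂ)) ∂μ = 0) (n : ℕ) :
    ‖∫ ω, Complex.exp ((∑ k ∈ range n, d k ω : ℝ) * Complex.I
        + ((∑ k ∈ range n, w k ω : ℝ) / 2 : ℝ)) ∂μ - 1‖ ≤ 2 * Real.exp (K / 2) * η * K := by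
  set Z : ℕ → Ω → ℂ := fun n ω => Complex.exp ((∑ k ∈ range n, d k ω : ℝ) * Complex.I
        + ((∑ k ∈ range n, w k ω : ℝ) / 2 : ℝ)) with hZ
  have hdm : ∀ k, Measurable (d k) := fun k => (hd k).mono (ℱ.le _) le_rfl
  have hwm : ∀ k, Measurable (w k) := fun k => (hw k).mono (ℱ.le _) le_rfl
  have hZm : ∀ n, Measurable[ℱ n] (Z n) := by
    intro n
    have e1 : Measurable[ℱ n] (fun ω => ∑ k ∈ range n, d k ω) :=
      Finset.measurable_fun_sum _ fun k hk =>
        (hd k).mono (ℱ.mono (Nat.succ_le_of_lt (mem_range.1 hk))) le_rfl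
    have e2 : Measurable[ℱ n] (fun ω => ∑ k ∈ range n, w k ω) :=
      Finset.measurable_fun_sum _ fun k hk =>
        (hw k).mono (ℱ.mono (mem_range.1 hk).le) le_rfl
    simp only [hZ]
    exact Complex.measurable_exp.comp (((Complex.measurable_ofReal.comp e1).mul_const _).add
      (Complex.measurable_ofReal.comp (e2.div_const _)))
  have hZn : ∀ n ω, ‖Z n ω‖ = Real.exp ((∑ k ∈ range n, w k ω) / 2) := by
    intro n ω
    simp only [hZ, Complex.norm_exp]
    congr 1
    simp
  have hZb : ∀ n ω, ‖Z n ω‖ ≤ Real.exp (K / 2) := by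
    intro n ω
    rw [hZn]
    exact Real.exp_le_exp.2 (by linarith [hK n ω])
  have hZi : ∀ n, Integrable (Z n) μ := fun n =>
    aux_integrable μ _ (((hZm n).mono (ℱ.le n) le_rfl).aestronglyMeasurable) _ (hZb n)
  have hwi : ∀ k, Integrable (w k) μ := fun k =>
    aux_integrable μ _ (hwm k).aestronglyMeasurable η (fun ω => by
      rw [Real.norm_eq_abs, abs_of_nonneg (hw0 k ω)]; exact hwη k ω)
  have hd2b : ∀ k ω, d k ω ^ 2 ≤ 1 := fun k ω => by
    rw [← sq_abs]; exact pow_le_one₀ (abs_nonneg _) ((hdη k ω).trans hη1)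
  have hd2i : ∀ k, Integrable (fun ω => d k ω ^ 2) μ := fun k =>
    aux_integrable μ _ ((hdm k).pow_const 2).aestronglyMeasurable 1 (fun ω => by
      rw [Real.norm_eq_abs, abs_of_nonneg (sq_nonneg _)]; exact hd2b k ω)
  have hEd : ∀ k, ∫ ω, d k ω ^ 2 ∂μ = ∫ ω, w k ω ∂μ := by
    intro k
    have := h2 k (fun _ => 1) measurable_const ⟨1, by simp⟩
    have e : ∀ ω, (1 : ℂ) * ((d k ω : ℂ) ^ 2 - (w k ω : ℂ)) = ((d k ω ^ 2 - w k ω : ℝ) : ℂ) := by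
      intro ω; push_cast; ring
    simp_rw [e] at this
    rw [integral_complex_ofReal, integral_sub (hd2i k) (hwi k)] at this
    have := Complex.ofReal_eq_zero.1 this
    linarith
  have hstep : ∀ j, ‖∫ ω, Z (j + 1) ω ∂μ - ∫ ω, Z j ω ∂μ‖
      ≤ 2 * Real.exp (K / 2) * η * ∫ ω, w j ω ∂μ := by
    intro j
    set G : Ω → ℂ := fun ω => Z j ω * (Real.exp (w j ω / 2) : ℂ) with hG
    have hGm : Measurable[ℱ j] G :=
      (hZm j).mul (Complex.measurable_ofReal.comp (Real.measurable_exp.comp ((hw j).div_const _)))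
    have hGn : ∀ ω, ‖G ω‖ ≤ Real.exp (K / 2) := by
      intro ω
      have e : ‖G ω‖ = Real.exp ((∑ k ∈ range (j + 1), w k ω) / 2) := by
        simp only [hG, norm_mul, hZn, Complex.norm_real, Real.norm_eq_abs, Real.abs_exp]
        rw [← Real.exp_add, Finset.sum_range_succ]; congr 1; ring
      rw [e]
      exact Real.exp_le_exp.2 (by linarith [hK (j + 1) ω])
    have hGM : Measurable G := hGm.mono (ℱ.le j) le_rfl
    have hdC : Measurable fun ω => (d j ω : ℂ) := Complex.measurable_ofReal.comp (hdm j)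
    have hwC : Measurable fun ω => (w j ω : ℂ) := Complex.measurable_ofReal.comp (hwm j)
    have hwle1 : ∀ ω, w j ω ≤ 1 := fun ω => (hwη j ω).trans hη1
    -- the remainder
    set R : Ω → ℂ := fun ω => Z (j + 1) ω - Z j ω - G ω * (d j ω : ℂ) * Complex.I
      + G ω * ((d j ω : ℂ) ^ 2 - (w j ω : ℂ)) * (1 / 2) with hR
    have hi1 : Integrable (fun ω => G ω * (d j ω : ℂ)) μ :=
      aux_integrable μ _ (hGM.mul hdC).aestronglyMeasurable (Real.exp (K / 2) * 1) (fun ω => by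
        rw [norm_mul]
        refine mul_le_mul (hGn ω) ?_ (norm_nonneg _) (Real.exp_pos _).le
        rw [Complex.norm_real]; exact (hdη j ω).trans hη1)
    have hi2 : Integrable (fun ω => G ω * ((d j ω : ℂ) ^ 2 - (w j ω : ℂ))) μ :=
      aux_integrable μ _ (hGM.mul ((hdC.pow_const 2).sub hwC)).aestronglyMeasurable
        (Real.exp (K / 2) * 1) (fun ω => by
        rw [norm_mul]
        refine mul_le_mul (hGn ω) ?_ (norm_nonneg _) (Real.exp_pos _).le
        rw [← Complex.ofReal_pow, ← Complex.ofReal_sub, Complex.norm_real, Real.norm_eq_abs, abs_le]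
        have := hd2b j ω
        have := hw0 j ω
        have := hwle1 ω
        constructor <;> nlinarith [sq_nonneg (d j ω)])
    have hRint : ∫ ω, R ω ∂μ = ∫ ω, Z (j + 1) ω ∂μ - ∫ ω, Z j ω ∂μ := by
      simp only [hR]
      have i1 : Integrable (fun ω => Z (j + 1) ω - Z j ω) μ := (hZi _).sub (hZi _)
      have i2 : Integrable (fun ω => Z (j + 1) ω - Z j ω - G ω * (d j ω : ℂ) * Complex.I) μ :=
        i1.sub (hi1.mul_const _)
      rw [integral_add i2 (hi2.mul_const _),
        integral_sub i1 (hi1.mul_const _), integral_sub (hZi _) (hZi _),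
        integral_mul_const, integral_mul_const, h1 j G hGm ⟨_, hGn⟩, h2 j G hGm ⟨_, hGn⟩]
      ring
    have hRb : ∀ ω, ‖R ω‖ ≤ Real.exp (K / 2) * η * (d j ω ^ 2 + w j ω) := by
      intro ω
      have hZs : Z (j + 1) ω = G ω * Complex.exp (d j ω * Complex.I) := by
        simp only [hZ, hG, Complex.ofReal_exp, ← Complex.exp_add, Finset.sum_range_succ]
        congr 1; push_cast; ring
      have hdec : R ω = G ω * (Complex.exp (d j ω * Complex.I)
            - (1 + d j ω * Complex.I - (d j ω : ℂ) ^ 2 / 2))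
          + Z j ω * ((Real.exp (w j ω / 2) * (1 - w j ω / 2) - 1 : ℝ) : ℂ) := by
        simp only [hR, hZs, hG]; push_cast; ring
      have b1 : ‖G ω * (Complex.exp (d j ω * Complex.I)
            - (1 + d j ω * Complex.I - (d j ω : ℂ) ^ 2 / 2))‖ ≤ Real.exp (K / 2) * (η * d j ω ^ 2) := by
        rw [norm_mul]
        refine mul_le_mul (hGn ω) ?_ (norm_nonneg _) (Real.exp_pos _).le
        refine (aux_exp_I _ ((hdη j ω).trans hη1)).trans ?_
        rw [← sq_abs (d j ω)]
        nlinarith [hdη j ω, abs_nonneg (d j ω), sq_nonneg |d j ω|,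
          mul_le_mul_of_nonneg_right (hdη j ω) (sq_nonneg |d j ω|)]
      have b2 : ‖Z j ω * ((Real.exp (w j ω / 2) * (1 - w j ω / 2) - 1 : ℝ) : ℂ)‖
          ≤ Real.exp (K / 2) * (η * w j ω) := by
        have hw' := hw0 j ω
        rw [norm_mul, Complex.norm_real, Real.norm_eq_abs]
        calc ‖Z j ω‖ * |Real.exp (w j ω / 2) * (1 - w j ω / 2) - 1|
            ≤ ‖Z j ω‖ * (Real.exp (w j ω / 2) * (w j ω / 2) ^ 2) :=
              mul_le_mul_of_nonneg_left (aux_exp_quad _ (by linarith)) (norm_nonneg _)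
          _ = ‖G ω‖ * (w j ω / 2) ^ 2 := by
              simp only [hG, norm_mul, Complex.norm_real, Real.norm_eq_abs, Real.abs_exp]; ring
          _ ≤ Real.exp (K / 2) * (η * w j ω) := by
              refine mul_le_mul (hGn ω) ?_ (sq_nonneg _) (Real.exp_pos _).le
              nlinarith [hwη j ω, mul_le_mul_of_nonneg_right (hwη j ω) hw']
      rw [hdec]
      refine (norm_add_le _ _).trans ?_
      linarith
    rw [← hRint]
    calc ‖∫ ω, R ω ∂μ‖ ≤ ∫ ω, Real.exp (K / 2) * η * (d j ω ^ 2 + w j ω) ∂μ :=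
          norm_integral_le_of_norm_le (((hd2i j).add (hwi j)).const_mul _)
            (Eventually.of_forall hRb)
      _ = _ := by
          rw [integral_const_mul, integral_add (hd2i j) (hwi j), hEd]; ring
  have hind : ∀ n, ‖∫ ω, Z n ω ∂μ - 1‖
      ≤ 2 * Real.exp (K / 2) * η * ∑ k ∈ range n, ∫ ω, w k ω ∂μ := by
    intro n
    induction n with
    | zero => simp [hZ]
    | succ j ih =>
      rw [Finset.sum_range_succ, mul_add]
      calc ‖∫ ω, Z (j + 1) ω ∂μ - 1‖
          = ‖(∫ ω, Z j ω ∂μ - 1) + (∫ ω, Z (j + 1) ω ∂μ - ∫ ω, Z j ω ∂μ)‖ := by congr 1; ring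
        _ ≤ _ := (norm_add_le _ _).trans (add_le_add ih (hstep j))
  refine (hind n).trans ?_
  refine mul_le_mul_of_nonneg_left ?_ (by positivity)
  rw [← integral_finsetSum _ (fun k _ => hwi k)]
  calc ∫ ω, ∑ k ∈ range n, w k ω ∂μ ≤ ∫ _, K ∂μ :=
        integral_mono (integrable_finsetSum _ fun k _ => hwi k) (integrable_const _) (hK n)
    _ = K := by simp

/-- Bounded measurable real functions. -/
def BM (m : MeasurableSpace Ω) (f : Ω → ℝ) : Prop :=
  Measurable[m] f ∧ ∃ C, ∀ ω, |f ω| ≤ C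

namespace BM

variable {m m' : MeasurableSpace Ω} {f g : Ω → ℝ}

lemma const (c : ℝ) : BM m (fun _ : Ω => c) := ⟨measurable_const, |c|, fun _ => le_rfl⟩

lemma add (hf : BM m f) (hg : BM m g) : BM m (fun ω => f ω + g ω) := by
  obtain ⟨hf, C, hC⟩ := hf
  obtain ⟨hg, D, hD⟩ := hg
  exact ⟨hf.add hg, C + D, fun ω => (abs_add_le _ _).trans (add_le_add (hC ω) (hD ω))⟩

lemma mul (hf : BM m f) (hg : BM m g) : BM m (fun ω => f ω * g ω) := by
  obtain ⟨hf, C, hC⟩ := hf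
  obtain ⟨hg, D, hD⟩ := hg
  refine ⟨hf.mul hg, C * D, fun ω => ?_⟩
  rw [abs_mul]
  exact mul_le_mul (hC ω) (hD ω) (abs_nonneg _) ((abs_nonneg _).trans (hC ω))

lemma cmul (c : ℝ) (hf : BM m f) : BM m (fun ω => c * f ω) := (const c).mul hf

lemma mulc (hf : BM m f) (c : ℝ) : BM m (fun ω => f ω * c) := hf.mul (const c)

lemma divc (hf : BM m f) (c : ℝ) : BM m (fun ω => f ω / c) := by
  simpa [div_eq_mul_inv] using hf.mulc c⁻¹

lemma sub (hf : BM m f) (hg : BM m g) : BM m (fun ω => f ω - g ω) := by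
  simpa [sub_eq_add_neg] using hf.add (hg.cmul (-1))

lemma pow (hf : BM m f) (n : ℕ) : BM m (fun ω => f ω ^ n) := by
  induction n with
  | zero => simpa using const 1
  | succ n ih => simpa [pow_succ] using ih.mul hf

lemma sum {ι : Type*} (s : Finset ι) {F : ι → Ω → ℝ} (h : ∀ i ∈ s, BM m (F i)) :
    BM m (fun ω => ∑ i ∈ s, F i ω) := by
  classical
  induction s using Finset.induction_on with
  | empty => simpa using const 0
  | insert i s hi ih =>
    simp only [Finset.sum_insert hi]
    exact (h i (Finset.mem_insert_self _ _)).add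
      (ih fun j hj => h j (Finset.mem_insert_of_mem hj))

lemma mono (hm : m ≤ m') (hf : BM m f) : BM m' f := ⟨hf.1.mono hm le_rfl, hf.2⟩

lemma int {m0 : MeasurableSpace Ω} {μ : Measure Ω} [IsProbabilityMeasure μ] {f : Ω → ℝ}
    (hf : BM m0 f) : Integrable f μ := by
  obtain ⟨hf, C, hC⟩ := hf
  exact aux_integrable μ f hf.aestronglyMeasurable C hC

end BM

section ERW

set_option linter.unusedSectionVars false

variable {m0 : MeasurableSpace Ω} {μ : Measure Ω} [IsProbabilityMeasure μ]
  {ℱ : Filtration ℕ m0} {X : ℕ → Ω → ℝ} {p : ℝ}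

/-- `x k = S k / k`. -/
def erwx (X : ℕ → Ω → ℝ) (k : ℕ) (ω : Ω) : ℝ := erwS X k ω / k

/-- martingale increments of `P`. -/
def erwd (X : ℕ → Ω → ℝ) (a : ℝ) (k : ℕ) (ω : Ω) : ℝ :=
  erwx X k ω * (X (k + 1) ω - a * erwx X k ω) / (1 - a ^ 2 * erwx X k ω ^ 2)

/-- conditional variances of the increments of `P`. -/
def erwv (X : ℕ → Ω → ℝ) (a : ℝ) (k : ℕ) (ω : Ω) : ℝ :=
  erwx X k ω ^ 2 / (1 - a ^ 2 * erwx X k ω ^ 2)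

lemma erwx_zero (ω : Ω) : erwx X 0 ω = 0 := by simp [erwx]

lemma erwP_eq (a : ℝ) (n : ℕ) (ω : Ω) : erwP X a n ω = ∑ k ∈ range n, erwd X a k ω := by
  have h0 : erwd X a 0 ω = 0 := by simp [erwd, erwx_zero]
  have hP : erwP X a n ω = ∑ k ∈ Finset.Icc 1 (n - 1), erwd X a k ω := rfl
  rw [hP]
  refine Finset.sum_subset ?_ ?_
  · intro k hk
    rw [Finset.mem_Icc] at hk
    rw [Finset.mem_range]; omega
  · intro k hk hk'
    rw [Finset.mem_Icc] at hk'
    rw [Finset.mem_range] at hk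
    have : k = 0 := by omega
    rw [this, h0]

lemma erwS_succ (k : ℕ) (ω : Ω) : erwS X (k + 1) ω = erwS X k ω + X (k + 1) ω := by
  simp [erwS, Finset.sum_Icc_succ_top]

lemma erwX_sq (h : IsERW μ ℱ X p) (k : ℕ) (ω : Ω) : X (k + 1) ω ^ 2 = 1 := by
  rcases h.2.2.1 (k + 1) (by omega) ω with e | e <;> simp [e]

lemma erwX_abs (h : IsERW μ ℱ X p) (k : ℕ) (ω : Ω) : |X (k + 1) ω| = 1 := by
  rcases h.2.2.1 (k + 1) (by omega) ω with e | e <;> simp [e]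

lemma erwS_abs (h : IsERW μ ℱ X p) (k : ℕ) (ω : Ω) : |erwS X k ω| ≤ k := by
  induction k with
  | zero => simp [erwS]
  | succ k ih =>
    rw [erwS_succ]
    refine (abs_add_le _ _).trans ?_
    rw [erwX_abs h]; push_cast; linarith

lemma erwx_abs (h : IsERW μ ℱ X p) (k : ℕ) (ω : Ω) : |erwx X k ω| ≤ 1 := by
  rw [erwx, abs_div, Nat.abs_cast]
  exact div_le_one_of_le₀ (erwS_abs h k ω) (by positivity)

lemma erwx_sq (h : IsERW μ ℱ X p) (k : ℕ) (ω : Ω) : erwx X k ω ^ 2 ≤ 1 := by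
  rw [← sq_abs]; exact pow_le_one₀ (abs_nonneg _) (erwx_abs h k ω)

lemma erwX_BM (h : IsERW μ ℱ X p) (k : ℕ) : BM (ℱ (k + 1)) (X (k + 1)) :=
  ⟨h.2.2.2.1 _ (by omega), 1, fun ω => (erwX_abs h k ω).le⟩

lemma erwS_BM (h : IsERW μ ℱ X p) (k : ℕ) : BM (ℱ k) (erwS X k) := by
  refine ⟨?_, k, erwS_abs h k⟩
  induction k with
  | zero =>
    have : erwS X 0 = fun _ => (0 : ℝ) := by funext ω; simp [erwS]
    rw [this]; exact measurable_const
  | succ k ih =>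
    have : erwS X (k + 1) = fun ω => erwS X k ω + X (k + 1) ω := funext (erwS_succ k)
    rw [this]
    exact (ih.mono (ℱ.mono (Nat.le_succ k)) le_rfl).add (erwX_BM h k).1

lemma erwx_BM (h : IsERW μ ℱ X p) (k : ℕ) : BM (ℱ k) (erwx X k) := (erwS_BM h k).divc _

/-- basic orthogonality. -/
lemma erw_orth {E : Type*} [NormedAddCommGroup E] [NormedSpace ℝ E] [CompleteSpace E]
    (h : IsERW μ ℱ X p) (k : ℕ) (hk : 1 ≤ k) (g : Ω → E)
    (hg : StronglyMeasurable[ℱ k] g) (hC : ∃ C, ∀ ω, ‖g ω‖ ≤ C) :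
    ∫ ω, (X (k + 1) ω - (2 * p - 1) * erwx X k ω) • g ω ∂μ = 0 := by
  obtain ⟨C, hC⟩ := hC
  have hgm : AEStronglyMeasurable g μ := (hg.mono (ℱ.le k)).aestronglyMeasurable
  have hgi : Integrable g μ := aux_integrable μ g hgm C hC
  have hXB : BM m0 (X (k + 1)) := (erwX_BM h k).mono (ℱ.le _)
  have hxB : BM m0 (fun ω => (2 * p - 1) * erwx X k ω) :=
    ((erwx_BM h k).mono (ℱ.le _)).cmul _
  have hsm : ∀ f : Ω → ℝ, BM m0 f → Integrable (f • g) μ := by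
    intro f hf
    obtain ⟨hf, D, hD⟩ := hf
    exact hgi.bdd_smul D hf.aestronglyMeasurable (Eventually.of_forall hD)
  have h1 := condExp_smul_of_aestronglyMeasurable_right (m := ℱ k) (hXB.int (μ := μ))
    (hsm _ hXB) hg.aestronglyMeasurable
  have h2 : ∫ ω, X (k + 1) ω • g ω ∂μ = ∫ ω, ((2 * p - 1) * erwx X k ω) • g ω ∂μ := by
    have := integral_condExp (ℱ.le k) (f := X (k + 1) • g) (μ := μ)
    change ∫ ω, (X (k + 1) • g) ω ∂μ = _
    rw [← this]
    refine integral_congr_ae ?_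
    filter_upwards [h1, h.2.2.2.2 k hk] with ω e1 e2
    rw [e1]
    simp only [Pi.smul_apply', e2, erwx]
  simp_rw [sub_smul]
  have i1 : Integrable (fun ω => X (k + 1) ω • g ω) μ := hsm _ hXB
  have i2 : Integrable (fun ω => ((2 * p - 1) * erwx X k ω) • g ω) μ := hsm _ hxB
  rw [integral_sub i1 i2, h2, sub_self]

/-- real version. -/
lemma erw_orth_real (h : IsERW μ ℱ X p) (k : ℕ) (hk : 1 ≤ k) (g : Ω → ℝ) (hg : BM (ℱ k) g) :
    ∫ ω, g ω * X (k + 1) ω ∂μ = (2 * p - 1) * ∫ ω, g ω * erwx X k ω ∂μ := by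
  have := erw_orth h k hk g hg.1.stronglyMeasurable hg.2
  have hg0 : BM m0 g := hg.mono (ℱ.le _)
  have e : ∀ ω, (X (k + 1) ω - (2 * p - 1) * erwx X k ω) • g ω
      = g ω * X (k + 1) ω - (2 * p - 1) * (g ω * erwx X k ω) := by
    intro ω; rw [smul_eq_mul]; ring
  simp_rw [e] at this
  rw [integral_sub (hg0.mul ((erwX_BM h k).mono (ℱ.le _))).int
    ((hg0.mul ((erwx_BM h k).mono (ℱ.le _))).cmul _).int, integral_const_mul] at this
  linarith

end ERW

section ERW2

set_option linter.unusedSectionVars false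

variable {m0 : MeasurableSpace Ω} {μ : Measure Ω} [IsProbabilityMeasure μ]
  {ℱ : Filtration ℕ m0} {X : ℕ → Ω → ℝ} {p : ℝ}

lemma erwS_BM0 (h : IsERW μ ℱ X p) (k : ℕ) : BM m0 (erwS X k) := (erwS_BM h k).mono (ℱ.le _)
lemma erwx_BM0 (h : IsERW μ ℱ X p) (k : ℕ) : BM m0 (erwx X k) := (erwx_BM h k).mono (ℱ.le _)
lemma erwX_BM0 (h : IsERW μ ℱ X p) (k : ℕ) : BM m0 (X (k + 1)) := (erwX_BM h k).mono (ℱ.le _)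

lemma erw_cross (h : IsERW μ ℱ X p) (k j : ℕ) (hk : 1 ≤ k) :
    ∫ ω, erwS X k ω ^ j * X (k + 1) ω ∂μ = (2 * p - 1) / k * ∫ ω, erwS X k ω ^ (j + 1) ∂μ := by
  rw [erw_orth_real h k hk _ ((erwS_BM h k).pow j)]
  have : ∀ ω, erwS X k ω ^ j * erwx X k ω = (1 / (k : ℝ)) * erwS X k ω ^ (j + 1) := by
    intro ω; rw [erwx, pow_succ]; ring
  simp_rw [this]
  rw [integral_const_mul]; ring

lemma erw_rec2 (h : IsERW μ ℱ X p) (k : ℕ) (hk : 1 ≤ k) :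
    ∫ ω, erwS X (k + 1) ω ^ 2 ∂μ = (1 + 2 * (2 * p - 1) / k) * ∫ ω, erwS X k ω ^ 2 ∂μ + 1 := by
  have e : ∀ ω, erwS X (k + 1) ω ^ 2
      = erwS X k ω ^ 2 + 2 * (erwS X k ω ^ 1 * X (k + 1) ω) + 1 := by
    intro ω
    rw [erwS_succ]
    linear_combination erwX_sq h k ω
  simp_rw [e]
  have b2 := (erwS_BM0 h k).pow 2
  have b1 := (((erwS_BM0 h k).pow 1).mul (erwX_BM0 h k)).cmul 2
  rw [integral_add (b2.add b1).int (BM.const 1).int, integral_add b2.int b1.int,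
    integral_const_mul, erw_cross h k 1 hk]
  simp; ring

lemma erw_rec4 (h : IsERW μ ℱ X p) (k : ℕ) (hk : 1 ≤ k) :
    ∫ ω, erwS X (k + 1) ω ^ 4 ∂μ = (1 + 4 * (2 * p - 1) / k) * ∫ ω, erwS X k ω ^ 4 ∂μ
      + (6 + 4 * (2 * p - 1) / k) * ∫ ω, erwS X k ω ^ 2 ∂μ + 1 := by
  have e : ∀ ω, erwS X (k + 1) ω ^ 4
      = erwS X k ω ^ 4 + 4 * (erwS X k ω ^ 3 * X (k + 1) ω) + 6 * erwS X k ω ^ 2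
        + 4 * (erwS X k ω ^ 1 * X (k + 1) ω) + 1 := by
    intro ω
    rw [erwS_succ]
    linear_combination (6 * erwS X k ω ^ 2 + 4 * erwS X k ω * X (k + 1) ω + X (k + 1) ω ^ 2 + 1)
      * erwX_sq h k ω
  simp_rw [e]
  have b4 := (erwS_BM0 h k).pow 4
  have b3 := (((erwS_BM0 h k).pow 3).mul (erwX_BM0 h k)).cmul 4
  have b2 := ((erwS_BM0 h k).pow 2).cmul 6
  have b1 := (((erwS_BM0 h k).pow 1).mul (erwX_BM0 h k)).cmul 4
  rw [integral_add (((b4.add b3).add b2).add b1).int (BM.const 1).int,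
    integral_add ((b4.add b3).add b2).int b1.int, integral_add (b4.add b3).int b2.int,
    integral_add b4.int b3.int,
    integral_const_mul, integral_const_mul, integral_const_mul, erw_cross h k 1 hk,
    erw_cross h k 3 hk]
  simp; ring

lemma erw_one_sq (h : IsERW μ ℱ X p) (ω : Ω) : erwS X 1 ω ^ 2 = 1 := by
  have := erwX_sq h 0 ω
  rw [erwS_succ]; simpa [erwS] using this

lemma erw_m2 (h : IsERW μ ℱ X p) (hp : 0 < p) (B : ℝ) (hB1 : 1 ≤ B)
    (hBc : 1 ≤ B * (3 - 4 * p)) (k : ℕ) (hk : 1 ≤ k) : ∫ ω, erwS X k ω ^ 2 ∂μ ≤ B * k := by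
  induction k, hk using Nat.le_induction with
  | base => simp_rw [erw_one_sq h]; simpa using hB1
  | succ k hk ih =>
    rw [erw_rec2 h k hk]
    have hk' : (1 : ℝ) ≤ k := by exact_mod_cast hk
    have hk0 : (0 : ℝ) < k := by linarith
    have h0 : 0 ≤ ∫ ω, erwS X k ω ^ 2 ∂μ := integral_nonneg fun ω => sq_nonneg _
    push_cast
    by_cases hs : 0 ≤ 1 + 2 * (2 * p - 1) / (k : ℝ)
    · have := mul_le_mul_of_nonneg_left ih hs
      have e : (1 + 2 * (2 * p - 1) / (k : ℝ)) * (B * k) = B * k + 2 * (2 * p - 1) * B := by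
        field_simp
      nlinarith
    · have := mul_nonneg (neg_nonneg.2 (not_le.1 hs).le) h0
      nlinarith

lemma erw_m4 (h : IsERW μ ℱ X p) (hp : 0 < p) (hp' : p < 3 / 4) (B : ℝ) (hB1 : 1 ≤ B)
    (hBc : 1 ≤ B * (3 - 4 * p)) (k : ℕ) (hk : 1 ≤ k) :
    ∫ ω, erwS X k ω ^ 4 ∂μ ≤ 11 * B ^ 2 * (k : ℝ) ^ 2 := by
  induction k, hk using Nat.le_induction with
  | base =>
    have : ∀ ω, erwS X 1 ω ^ 4 = 1 := by
      intro ω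
      rw [show 4 = 2 * 2 by norm_num, pow_mul, erw_one_sq h]; norm_num
    simp_rw [this]; simp; nlinarith
  | succ k hk ih =>
    rw [erw_rec4 h k hk]
    have hk' : (1 : ℝ) ≤ k := by exact_mod_cast hk
    have hk0 : (0 : ℝ) < k := by linarith
    have h0 : 0 ≤ ∫ ω, erwS X k ω ^ 4 ∂μ := integral_nonneg fun ω => by positivity
    have h0' : 0 ≤ ∫ ω, erwS X k ω ^ 2 ∂μ := integral_nonneg fun ω => sq_nonneg _
    have hm2 := erw_m2 h hp B hB1 hBc k hk
    push_cast
    have hq : (6 + 4 * (2 * p - 1) / (k : ℝ)) * ∫ ω, erwS X k ω ^ 2 ∂μ + 1 ≤ 11 * B * k := by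
      have e1 : 4 * (2 * p - 1) / (k : ℝ) ≤ 4 := by
        rw [div_le_iff₀ hk0]; nlinarith
      have e2 : (6 + 4 * (2 * p - 1) / (k : ℝ)) * ∫ ω, erwS X k ω ^ 2 ∂μ
          ≤ 10 * ∫ ω, erwS X k ω ^ 2 ∂μ := mul_le_mul_of_nonneg_right (by linarith) h0'
      nlinarith
    have hBB : B ≤ B ^ 2 * (3 - 4 * p) := by nlinarith
    by_cases hs : 0 ≤ 1 + 4 * (2 * p - 1) / (k : ℝ)
    · have := mul_le_mul_of_nonneg_left ih hs
      have e : (1 + 4 * (2 * p - 1) / (k : ℝ)) * (11 * B ^ 2 * (k : ℝ) ^ 2)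
          = 11 * B ^ 2 * (k : ℝ) ^ 2 + 44 * (2 * p - 1) * B ^ 2 * k := by
        field_simp
        try ring
      have e3 : B * k ≤ B ^ 2 * (3 - 4 * p) * k := mul_le_mul_of_nonneg_right hBB hk0.le
      have e4 : 0 ≤ B * k := by positivity
      nlinarith [sq_nonneg B]
    · have h3 := mul_nonneg (neg_nonneg.2 (not_le.1 hs).le) h0
      have h4 : B * k ≤ B ^ 2 * ((k : ℝ) + 1) ^ 2 :=
        mul_le_mul (by nlinarith) (by nlinarith) hk0.le (by positivity)
      nlinarith

lemma erw_x2 (h : IsERW μ ℱ X p) (hp : 0 < p) (B : ℝ) (hB1 : 1 ≤ B)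
    (hBc : 1 ≤ B * (3 - 4 * p)) (k : ℕ) :
    ∫ ω, erwx X k ω ^ 2 ∂μ ≤ 2 * B / (k + 1) := by
  rcases Nat.eq_zero_or_pos k with rfl | hk
  · simp [erwx_zero]; linarith
  · have hk' : (1 : ℝ) ≤ k := by exact_mod_cast hk
    have hk0 : (0 : ℝ) < k := by linarith
    have e : ∀ ω, erwx X k ω ^ 2 = (1 / (k : ℝ) ^ 2) * erwS X k ω ^ 2 := by
      intro ω; rw [erwx, div_pow]; ring
    simp_rw [e]
    rw [integral_const_mul]
    have h2 := erw_m2 h hp B hB1 hBc k hk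
    calc 1 / (k : ℝ) ^ 2 * ∫ ω, erwS X k ω ^ 2 ∂μ ≤ 1 / (k : ℝ) ^ 2 * (B * k) :=
          mul_le_mul_of_nonneg_left h2 (by positivity)
      _ = B / k := by field_simp
      _ ≤ 2 * B / (k + 1) := by
          rw [div_le_div_iff₀ hk0 (by linarith)]; nlinarith

lemma erw_x4 (h : IsERW μ ℱ X p) (hp : 0 < p) (hp' : p < 3 / 4) (B : ℝ) (hB1 : 1 ≤ B)
    (hBc : 1 ≤ B * (3 - 4 * p)) (k : ℕ) :
    ∫ ω, erwx X k ω ^ 4 ∂μ ≤ 44 * B ^ 2 * (1 / ((k : ℝ) + 1) ^ 2) := by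
  rcases Nat.eq_zero_or_pos k with rfl | hk
  · simp [erwx_zero]; positivity
  · have hk' : (1 : ℝ) ≤ k := by exact_mod_cast hk
    have hk0 : (0 : ℝ) < k := by linarith
    have e : ∀ ω, erwx X k ω ^ 4 = (1 / (k : ℝ) ^ 4) * erwS X k ω ^ 4 := by
      intro ω; rw [erwx, div_pow]; ring
    simp_rw [e]
    rw [integral_const_mul]
    have h2 := erw_m4 h hp hp' B hB1 hBc k hk
    calc 1 / (k : ℝ) ^ 4 * ∫ ω, erwS X k ω ^ 4 ∂μ ≤ 1 / (k : ℝ) ^ 4 * (11 * B ^ 2 * (k : ℝ) ^ 2) :=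
          mul_le_mul_of_nonneg_left h2 (by positivity)
      _ = 11 * B ^ 2 * (1 / (k : ℝ) ^ 2) := by field_simp
      _ ≤ 11 * B ^ 2 * (4 * (1 / ((k : ℝ) + 1) ^ 2)) := by
          refine mul_le_mul_of_nonneg_left ?_ (by positivity)
          rw [mul_one_div, div_le_div_iff₀ (by positivity) (by positivity)]; nlinarith
      _ = _ := by ring

/-- increments of the auxiliary martingale. -/
def erwm (X : ℕ → Ω → ℝ) (a : ℝ) (k : ℕ) (ω : Ω) : ℝ :=
  2 * (k / (k + 1) : ℝ) * erwx X k ω * (X (k + 1) ω - a * erwx X k ω)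

lemma erwm_BM (h : IsERW μ ℱ X p) (k : ℕ) : BM (ℱ (k + 1)) (erwm X (2 * p - 1) k) := by
  have hx := (erwx_BM h k).mono (ℱ.mono (Nat.le_succ k))
  exact (hx.cmul _).mul ((erwX_BM h k).sub (hx.cmul _))

lemma erwM_BM (h : IsERW μ ℱ X p) (n : ℕ) :
    BM (ℱ n) (fun ω => ∑ k ∈ range n, erwm X (2 * p - 1) k ω) :=
  BM.sum _ fun k hk => (erwm_BM h k).mono (ℱ.mono (Nat.succ_le_of_lt (mem_range.1 hk)))

lemma abs_eps (h : IsERW μ ℱ X p) (hp : 0 < p) (hp' : p < 3 / 4) (k : ℕ) (ω : Ω) :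
    |X (k + 1) ω - (2 * p - 1) * erwx X k ω| ≤ 2 := by
  have h1 := erwX_abs h k ω
  have h2 : |(2 * p - 1) * erwx X k ω| ≤ 1 * 1 := by
    rw [abs_mul]
    exact mul_le_mul (abs_le.2 ⟨by linarith, by linarith⟩) (erwx_abs h k ω) (abs_nonneg _) zero_le_one
  refine (abs_sub _ _).trans ?_
  linarith

lemma erw_M2 (h : IsERW μ ℱ X p) (hp : 0 < p) (hp' : p < 3 / 4) (B : ℝ) (hB1 : 1 ≤ B)
    (hBc : 1 ≤ B * (3 - 4 * p)) (n : ℕ) :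
    ∫ ω, (∑ k ∈ range n, erwm X (2 * p - 1) k ω) ^ 2 ∂μ
      ≤ 32 * B * ∑ k ∈ range n, 1 / ((k : ℝ) + 1) := by
  induction n with
  | zero => simp
  | succ n ih =>
    simp_rw [Finset.sum_range_succ]
    have e : ∀ ω, (∑ k ∈ range n, erwm X (2 * p - 1) k ω + erwm X (2 * p - 1) n ω) ^ 2
      = (∑ k ∈ range n, erwm X (2 * p - 1) k ω) ^ 2
        + 2 * ((∑ k ∈ range n, erwm X (2 * p - 1) k ω) * erwm X (2 * p - 1) n ω)
        + erwm X (2 * p - 1) n ω ^ 2 := by intro ω; ring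
    simp_rw [e]
    have bM := (erwM_BM h n).mono (ℱ.le _)
    have bm := (erwm_BM h n).mono (ℱ.le _)
    have b2 := (bM.mul bm).cmul 2
    rw [integral_add ((bM.pow 2).add b2).int (bm.pow 2).int, integral_add (bM.pow 2).int b2.int,
      integral_const_mul]
    have hc : ∫ ω, (∑ k ∈ range n, erwm X (2 * p - 1) k ω) * erwm X (2 * p - 1) n ω ∂μ = 0 := by
      rcases Nat.eq_zero_or_pos n with rfl | hn
      · simp
      · have hb := ((erwx_BM h n).cmul (2 * (n / (n + 1) : ℝ))).mul (erwM_BM h n)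
        rw [← erw_orth h n hn _ hb.1.stronglyMeasurable hb.2]
        refine integral_congr_ae (Eventually.of_forall fun ω => ?_)
        simp only [erwm, smul_eq_mul]; ring
    have hm : ∫ ω, erwm X (2 * p - 1) n ω ^ 2 ∂μ ≤ 16 * (2 * B / (n + 1)) := by
      calc ∫ ω, erwm X (2 * p - 1) n ω ^ 2 ∂μ ≤ ∫ ω, 16 * erwx X n ω ^ 2 ∂μ := by
            refine integral_mono (bm.pow 2).int (((erwx_BM0 h n).pow 2).cmul 16).int fun ω => ?_
            have h1 := abs_eps h hp hp' n ω
            have h2 : (X (n + 1) ω - (2 * p - 1) * erwx X n ω) ^ 2 ≤ 4 := by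
              rw [← sq_abs]; nlinarith [abs_nonneg (X (n + 1) ω - (2 * p - 1) * erwx X n ω)]
            have h3 : (n / (n + 1) : ℝ) ^ 2 ≤ 1 :=
              pow_le_one₀ (by positivity) (div_le_one_of_le₀ (by linarith) (by positivity))
            have h4 : erwm X (2 * p - 1) n ω ^ 2 = 4 * erwx X n ω ^ 2 *
              ((n / (n + 1) : ℝ) ^ 2 * (X (n + 1) ω - (2 * p - 1) * erwx X n ω) ^ 2) := by
              rw [erwm]; ring
            have h5 : (n / (n + 1) : ℝ) ^ 2 * (X (n + 1) ω - (2 * p - 1) * erwx X n ω) ^ 2 ≤ 1 * 4 :=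
              mul_le_mul h3 h2 (sq_nonneg _) zero_le_one
            simp only
            rw [h4]
            nlinarith [sq_nonneg (erwx X n ω)]
        _ ≤ _ := by
            rw [integral_const_mul]
            exact mul_le_mul_of_nonneg_left (erw_x2 h hp B hB1 hBc n) (by norm_num)
    rw [hc, mul_add]
    have : 16 * (2 * B / ((n : ℝ) + 1)) = 32 * B * (1 / ((n : ℝ) + 1)) := by ring
    linarith

lemma erw_ident (h : IsERW μ ℱ X p) (n : ℕ) (ω : Ω) :
    (3 - 4 * p) * ∑ k ∈ range n, erwx X k ω ^ 2 * (k / (k + 1) : ℝ)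
      = ∑ k ∈ range n, 1 / ((k : ℝ) + 1) - erwS X n ω ^ 2 / n
        + ∑ k ∈ range n, erwm X (2 * p - 1) k ω := by
  induction n with
  | zero => simp
  | succ n ih =>
    rw [Finset.sum_range_succ, Finset.sum_range_succ, Finset.sum_range_succ, mul_add, ih, erwm,
      erwS_succ]
    have hX := erwX_sq h n ω
    rcases Nat.eq_zero_or_pos n with rfl | hn
    · simp [erwx_zero, erwS] at hX ⊢
      rcases hX with hX | hX <;> simp [hX]
    · have hn0 : (0 : ℝ) < n := by exact_mod_cast hn
      rw [erwx]
      push_cast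
      field_simp
      linear_combination (n : ℝ) * hX

end ERW2

section ERW3

set_option linter.unusedSectionVars false

variable {m0 : MeasurableSpace Ω} {μ : Measure Ω} [IsProbabilityMeasure μ]
  {ℱ : Filtration ℕ m0} {X : ℕ → Ω → ℝ} {p : ℝ}

lemma erw_den (h : IsERW μ ℱ X p) (hp : 0 < p) (hp' : p < 3 / 4) (k : ℕ) (ω : Ω) :
    1 - (2 * p - 1) ^ 2 ≤ 1 - (2 * p - 1) ^ 2 * erwx X k ω ^ 2 := by
  have := erwx_sq h k ω
  nlinarith [sq_nonneg (2 * p - 1)]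

lemma erw_a2 (hp : 0 < p) (hp' : p < 3 / 4) : 0 < 1 - (2 * p - 1) ^ 2 := by nlinarith

lemma erw_inv_BM (h : IsERW μ ℱ X p) (hp : 0 < p) (hp' : p < 3 / 4) (k : ℕ) :
    BM (ℱ k) (fun ω => (1 - (2 * p - 1) ^ 2 * erwx X k ω ^ 2)⁻¹) := by
  refine ⟨((BM.const 1).sub (((erwx_BM h k).pow 2).cmul _)).1.inv, (1 - (2 * p - 1) ^ 2)⁻¹, fun ω => ?_⟩
  have h1 := erw_den h hp hp' k ω
  have h2 := erw_a2 hp hp'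
  rw [abs_of_nonneg (inv_nonneg.2 (by linarith))]
  exact inv_anti₀ h2 h1

lemma erwv_BM (h : IsERW μ ℱ X p) (hp : 0 < p) (hp' : p < 3 / 4) (k : ℕ) :
    BM (ℱ k) (erwv X (2 * p - 1) k) :=
  ((erwx_BM h k).pow 2).mul (erw_inv_BM h hp hp' k)

lemma erwd_BM (h : IsERW μ ℱ X p) (hp : 0 < p) (hp' : p < 3 / 4) (k : ℕ) :
    BM (ℱ (k + 1)) (erwd X (2 * p - 1) k) := by
  have hm := ℱ.mono (Nat.le_succ k)
  have hx := (erwx_BM h k).mono hm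
  exact (hx.mul ((erwX_BM h k).sub (hx.cmul _))).mul ((erw_inv_BM h hp hp' k).mono hm)

lemma harm_eq (n : ℕ) : ∑ k ∈ range n, 1 / ((k : ℝ) + 1) = ((harmonic n : ℚ) : ℝ) := by
  simp [harmonic]

lemma erw_pointwise (h : IsERW μ ℱ X p) (hp : 0 < p) (hp' : p < 3 / 4) (n : ℕ) (hn : 1 ≤ n)
    (r : ℝ) (hr : 0 < r) (ω : Ω) :
    |∑ k ∈ range n, erwv X (2 * p - 1) k ω - Real.log n / (3 - 4 * p)| ≤
      ∑ k ∈ range n, erwx X k ω ^ 4 * (1 - (2 * p - 1) ^ 2)⁻¹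
      + ∑ k ∈ range n, erwx X k ω ^ 2 * (1 / ((k : ℝ) + 1))
      + (3 - 4 * p)⁻¹ * (1 + erwS X n ω ^ 2 / n
        + (r + (∑ k ∈ range n, erwm X (2 * p - 1) k ω) ^ 2 / r)) := by
  have hc : 0 < 3 - 4 * p := by linarith
  have ha := erw_a2 hp hp'
  have hid := erw_ident h n ω
  set M := ∑ k ∈ range n, erwm X (2 * p - 1) k ω
  set H := ∑ k ∈ range n, 1 / ((k : ℝ) + 1) with hH
  set U := erwS X n ω ^ 2 / n with hU
  have hU0 : 0 ≤ U := by positivity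
  have hH1 : |H - Real.log n| ≤ 1 := by
    rw [hH, harm_eq, abs_le]
    have h1 := log_add_one_le_harmonic n
    have h2 := harmonic_le_one_add_log n
    have h3 : Real.log n ≤ Real.log ((n + 1 : ℕ) : ℝ) :=
      Real.log_le_log (by exact_mod_cast hn) (by push_cast; linarith)
    constructor <;> linarith
  have hM : |M| ≤ r + M ^ 2 / r := by
    rw [← sq_abs M, ← sub_nonneg]
    have : r + |M| ^ 2 / r - |M| = ((r - |M|) ^ 2 + r * |M|) / r := by field_simp; ring
    rw [this]
    positivity
  have hdec : ∑ k ∈ range n, erwv X (2 * p - 1) k ω - Real.log n / (3 - 4 * p)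
      = ∑ k ∈ range n, (erwv X (2 * p - 1) k ω - erwx X k ω ^ 2)
        + ∑ k ∈ range n, erwx X k ω ^ 2 * (1 / ((k : ℝ) + 1))
        + (3 - 4 * p)⁻¹ * ((H - Real.log n) - U + M) := by
    have e1 : ∑ k ∈ range n, erwx X k ω ^ 2 = ∑ k ∈ range n, erwx X k ω ^ 2 * (1 / ((k : ℝ) + 1))
        + ∑ k ∈ range n, erwx X k ω ^ 2 * (k / (k + 1) : ℝ) := by
      rw [← Finset.sum_add_distrib]
      refine Finset.sum_congr rfl fun k _ => ?_
      field_simp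
      try ring
    have e2 : ∑ k ∈ range n, erwx X k ω ^ 2 * (k / (k + 1) : ℝ)
        = (3 - 4 * p)⁻¹ * (H - U + M) := by
      rw [← hid]; field_simp
    rw [Finset.sum_sub_distrib, e1, e2]
    ring
  rw [hdec]
  have t1 : |∑ k ∈ range n, (erwv X (2 * p - 1) k ω - erwx X k ω ^ 2)|
      ≤ ∑ k ∈ range n, erwx X k ω ^ 4 * (1 - (2 * p - 1) ^ 2)⁻¹ := by
    refine (Finset.abs_sum_le_sum_abs _ _).trans (Finset.sum_le_sum fun k _ => ?_)
    have hd := erw_den h hp hp' k ω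
    have hd0 : 0 < 1 - (2 * p - 1) ^ 2 * erwx X k ω ^ 2 := by linarith
    have e : erwv X (2 * p - 1) k ω - erwx X k ω ^ 2
        = ((2 * p - 1) ^ 2 * erwx X k ω ^ 4) * (1 - (2 * p - 1) ^ 2 * erwx X k ω ^ 2)⁻¹ := by
      have hi := mul_inv_cancel₀ hd0.ne'
      rw [erwv, div_eq_mul_inv]
      linear_combination erwx X k ω ^ 2 * hi
    rw [e, abs_of_nonneg (by positivity)]
    refine mul_le_mul ?_ (inv_anti₀ ha hd) (by positivity) (by positivity)
    nlinarith [show 0 ≤ erwx X k ω ^ 4 by positivity]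
  have t2 : 0 ≤ ∑ k ∈ range n, erwx X k ω ^ 2 * (1 / ((k : ℝ) + 1)) :=
    Finset.sum_nonneg fun k _ => by positivity
  have t3 : |(3 - 4 * p)⁻¹ * ((H - Real.log n) - U + M)|
      ≤ (3 - 4 * p)⁻¹ * (1 + U + (r + M ^ 2 / r)) := by
    rw [abs_mul, abs_of_nonneg (by positivity)]
    refine mul_le_mul_of_nonneg_left ?_ (by positivity)
    rw [abs_le] at hH1 hM ⊢
    constructor <;> linarith
  refine (abs_add_le _ _).trans (add_le_add ((abs_add_le _ _).trans (add_le_add t1 ?_)) t3)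
  rw [abs_of_nonneg t2]

lemma erw_L1 (h : IsERW μ ℱ X p) (hp : 0 < p) (hp' : p < 3 / 4) :
    ∃ C : ℝ, ∀ n : ℕ, 3 ≤ n →
      ∫ ω, |∑ k ∈ range n, erwv X (2 * p - 1) k ω - Real.log n / (3 - 4 * p)| ∂μ
        ≤ C * Real.sqrt (Real.log n) := by
  have hc : 0 < 3 - 4 * p := by linarith
  have ha := erw_a2 hp hp'
  obtain ⟨B, hB1, hBc⟩ : ∃ B : ℝ, 1 ≤ B ∧ 1 ≤ B * (3 - 4 * p) := by
    refine ⟨max 1 (1 / (3 - 4 * p)), le_max_left _ _, ?_⟩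
    calc (1 : ℝ) = 1 / (3 - 4 * p) * (3 - 4 * p) := by field_simp
      _ ≤ _ := mul_le_mul_of_nonneg_right (le_max_right _ _) hc.le
  have hsum : Summable (fun k : ℕ => 1 / ((k : ℝ) + 1) ^ 2) := by
    have := (summable_nat_add_iff 1).2 (Real.summable_one_div_nat_pow.2 (one_lt_two))
    simpa using this
  set T := ∑' k : ℕ, 1 / ((k : ℝ) + 1) ^ 2 with hT
  have hT0 : 0 ≤ T := tsum_nonneg fun k => by positivity
  have hTn : ∀ n : ℕ, ∑ k ∈ range n, 1 / ((k : ℝ) + 1) ^ 2 ≤ T := fun n =>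
    hsum.sum_le_tsum _ fun k _ => by positivity
  set c := (3 - 4 * p)⁻¹ with hcdef
  have hc' : 0 < c := by positivity
  set A := (1 - (2 * p - 1) ^ 2)⁻¹ with hA
  have hA0 : 0 < A := by positivity
  refine ⟨44 * B ^ 2 * T * A + 2 * B * T + c * (1 + B) + c * (1 + 64 * B), fun n hn => ?_⟩
  have hn1 : 1 ≤ n := by omega
  have hn0 : (0 : ℝ) < n := by exact_mod_cast hn1
  have hL1 : 1 ≤ Real.log n := by
    rw [Real.le_log_iff_exp_le hn0]
    have := Real.exp_one_lt_three
    have : (3 : ℝ) ≤ n := by exact_mod_cast hn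
    linarith
  set L := Real.log n with hL
  set r := Real.sqrt L with hr
  have hr1 : 1 ≤ r := by rw [hr]; exact Real.one_le_sqrt.2 hL1
  have hrr : r * r = L := Real.mul_self_sqrt (by linarith)
  have hr0 : 0 < r := by linarith
  have bx : ∀ k j, BM m0 (fun ω => erwx X k ω ^ j) := fun k j => (erwx_BM0 h k).pow j
  have b1 : BM m0 (fun ω => ∑ k ∈ range n, erwx X k ω ^ 4 * A) :=
    BM.sum _ fun k _ => (bx k 4).mulc _
  have b2 : BM m0 (fun ω => ∑ k ∈ range n, erwx X k ω ^ 2 * (1 / ((k : ℝ) + 1))) :=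
    BM.sum _ fun k _ => (bx k 2).mulc _
  have b3 : BM m0 (fun ω => erwS X n ω ^ 2 / n) := ((erwS_BM0 h n).pow 2).divc _
  have b4 : BM m0 (fun ω => (∑ k ∈ range n, erwm X (2 * p - 1) k ω) ^ 2 / r) :=
    (((erwM_BM h n).mono (ℱ.le _)).pow 2).divc _
  have b5 : BM m0 (fun ω => 1 + erwS X n ω ^ 2 / n) := (BM.const 1).add b3
  have b6 : BM m0 (fun ω => r + (∑ k ∈ range n, erwm X (2 * p - 1) k ω) ^ 2 / r) :=
    (BM.const r).add b4
  have bV : BM m0 (fun ω => ∑ k ∈ range n, erwv X (2 * p - 1) k ω - L / (3 - 4 * p)) :=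
    (BM.sum _ fun k _ => (erwv_BM h hp hp' k).mono (ℱ.le _)).sub (BM.const _)
  have i1 : ∫ ω, ∑ k ∈ range n, erwx X k ω ^ 4 * A ∂μ ≤ 44 * B ^ 2 * T * A := by
    rw [integral_finsetSum _ fun k _ => ((bx k 4).mulc _).int]
    simp_rw [integral_mul_const]
    rw [← Finset.sum_mul]
    refine mul_le_mul_of_nonneg_right ?_ hA0.le
    calc _ ≤ ∑ k ∈ range n, 44 * B ^ 2 * (1 / ((k : ℝ) + 1) ^ 2) :=
          Finset.sum_le_sum fun k _ => erw_x4 h hp hp' B hB1 hBc k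
      _ ≤ _ := by
          rw [← Finset.mul_sum]
          exact mul_le_mul_of_nonneg_left (hTn n) (by positivity)
  have i2 : ∫ ω, ∑ k ∈ range n, erwx X k ω ^ 2 * (1 / ((k : ℝ) + 1)) ∂μ ≤ 2 * B * T := by
    rw [integral_finsetSum _ fun k _ => ((bx k 2).mulc _).int]
    simp_rw [integral_mul_const]
    calc _ ≤ ∑ k ∈ range n, 2 * B * (1 / ((k : ℝ) + 1) ^ 2) := by
          refine Finset.sum_le_sum fun k _ => ?_
          calc _ ≤ 2 * B / ((k : ℝ) + 1) * (1 / ((k : ℝ) + 1)) :=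
                mul_le_mul_of_nonneg_right (erw_x2 h hp B hB1 hBc k) (by positivity)
            _ = _ := by field_simp
      _ ≤ _ := by
          rw [← Finset.mul_sum]
          exact mul_le_mul_of_nonneg_left (hTn n) (by positivity)
  have i3 : ∫ ω, erwS X n ω ^ 2 / n ∂μ ≤ B := by
    rw [integral_div, div_le_iff₀ hn0]
    exact erw_m2 h hp B hB1 hBc n hn1
  have i4 : ∫ ω, (∑ k ∈ range n, erwm X (2 * p - 1) k ω) ^ 2 / r ∂μ ≤ 64 * B * r := by
    rw [integral_div, div_le_iff₀ hr0]
    refine (erw_M2 h hp hp' B hB1 hBc n).trans ?_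
    rw [harm_eq, mul_assoc (64 * B), hrr]
    have := harmonic_le_one_add_log n
    have : ((harmonic n : ℚ) : ℝ) ≤ 2 * L := by linarith
    nlinarith
  calc _ ≤ ∫ ω, (∑ k ∈ range n, erwx X k ω ^ 4 * A
      + ∑ k ∈ range n, erwx X k ω ^ 2 * (1 / ((k : ℝ) + 1))
      + c * (1 + erwS X n ω ^ 2 / n
        + (r + (∑ k ∈ range n, erwm X (2 * p - 1) k ω) ^ 2 / r))) ∂μ :=
        integral_mono bV.int.abs ((b1.add b2).add ((b5.add b6).cmul _)).int
          fun ω => erw_pointwise h hp hp' n hn1 r hr0 ω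
    _ = ∫ ω, ∑ k ∈ range n, erwx X k ω ^ 4 * A ∂μ
      + ∫ ω, ∑ k ∈ range n, erwx X k ω ^ 2 * (1 / ((k : ℝ) + 1)) ∂μ
      + c * (1 + ∫ ω, erwS X n ω ^ 2 / n ∂μ
        + (r + ∫ ω, (∑ k ∈ range n, erwm X (2 * p - 1) k ω) ^ 2 / r ∂μ)) := by
        rw [integral_add (b1.add b2).int ((b5.add b6).cmul _).int, integral_add b1.int b2.int,
          integral_const_mul, integral_add b5.int b6.int, integral_add (BM.const 1).int b3.int,
          integral_add (BM.const r).int b4.int]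
        simp
    _ ≤ 44 * B ^ 2 * T * A + 2 * B * T + c * (1 + B + (r + 64 * B * r)) := by
        gcongr
    _ ≤ _ := by
        have q1 : 0 ≤ 44 * B ^ 2 * T * A + 2 * B * T + c * (1 + B) := by positivity
        nlinarith [mul_le_mul_of_nonneg_left hr1 q1]

end ERW3

section ERW4

set_option linter.unusedSectionVars false

variable {m0 : MeasurableSpace Ω} {μ : Measure Ω} [IsProbabilityMeasure μ]
  {ℱ : Filtration ℕ m0} {X : ℕ → Ω → ℝ} {p : ℝ}

/-- complex orthogonality with a bounded real predictable factor. -/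
lemma erw_orthC (h : IsERW μ ℱ X p) (k : ℕ) (hk : 1 ≤ k) (f : Ω → ℝ) (hf : BM (ℱ k) f)
    (g : Ω → ℂ) (hg : Measurable[ℱ k] g) (hC : ∃ C, ∀ ω, ‖g ω‖ ≤ C) :
    ∫ ω, g ω * ((f ω * (X (k + 1) ω - (2 * p - 1) * erwx X k ω) : ℝ) : ℂ) ∂μ = 0 := by
  obtain ⟨C, hC⟩ := hC
  obtain ⟨hfm, D, hD⟩ := hf
  have := erw_orth h k hk (fun ω => f ω • g ω) (hfm.stronglyMeasurable.smul hg.stronglyMeasurable)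
    ⟨D * C, fun ω => by
      rw [norm_smul]
      exact mul_le_mul (hD ω) (hC ω) (norm_nonneg _) ((abs_nonneg _).trans (hD ω))⟩
  rw [← this]
  refine integral_congr_ae (Eventually.of_forall fun ω => ?_)
  simp only [Complex.real_smul]
  push_cast
  ring

lemma erw_h1 (h : IsERW μ ℱ X p) (hp : 0 < p) (hp' : p < 3 / 4) (k : ℕ)
    (g : Ω → ℂ) (hg : Measurable[ℱ k] g) (hC : ∃ C, ∀ ω, ‖g ω‖ ≤ C) :
    ∫ ω, g ω * (erwd X (2 * p - 1) k ω : ℂ) ∂μ = 0 := by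
  rcases Nat.eq_zero_or_pos k with rfl | hk
  · simp [erwd, erwx_zero]
  · rw [← erw_orthC h k hk _ ((erwx_BM h k).mul (erw_inv_BM h hp hp' k)) g hg hC]
    refine integral_congr_ae (Eventually.of_forall fun ω => ?_)
    simp only [erwd, div_eq_mul_inv]
    congr 2
    ring

lemma erw_h2 (h : IsERW μ ℱ X p) (hp : 0 < p) (hp' : p < 3 / 4) (k : ℕ)
    (g : Ω → ℂ) (hg : Measurable[ℱ k] g) (hC : ∃ C, ∀ ω, ‖g ω‖ ≤ C) :
    ∫ ω, g ω * ((erwd X (2 * p - 1) k ω : ℂ) ^ 2 - (erwv X (2 * p - 1) k ω : ℂ)) ∂μ = 0 := by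
  rcases Nat.eq_zero_or_pos k with rfl | hk
  · simp [erwd, erwv, erwx_zero]
  · rw [← erw_orthC h k hk _ ((((erwx_BM h k).pow 3).cmul (-2 * (2 * p - 1))).mul
      ((erw_inv_BM h hp hp' k).pow 2)) g hg hC]
    refine integral_congr_ae (Eventually.of_forall fun ω => ?_)
    simp only
    rw [← Complex.ofReal_pow, ← Complex.ofReal_sub]
    congr 2
    have hd0 : 0 < 1 - (2 * p - 1) ^ 2 * erwx X k ω ^ 2 :=
      (erw_a2 hp hp').trans_le (erw_den h hp hp' k ω)
    have hi := mul_inv_cancel₀ hd0.ne'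
    have hX := erwX_sq h k ω
    rw [erwd, erwv, div_eq_mul_inv, div_eq_mul_inv]
    set I := (1 - (2 * p - 1) ^ 2 * erwx X k ω ^ 2)⁻¹
    set x := erwx X k ω
    linear_combination x ^ 2 * I ^ 2 * hX + x ^ 2 * I * hi

lemma erwv_nonneg (h : IsERW μ ℱ X p) (hp : 0 < p) (hp' : p < 3 / 4) (k : ℕ) (ω : Ω) :
    0 ≤ erwv X (2 * p - 1) k ω :=
  div_nonneg (sq_nonneg _) ((erw_a2 hp hp').le.trans (erw_den h hp hp' k ω))

lemma erwv_le (h : IsERW μ ℱ X p) (hp : 0 < p) (hp' : p < 3 / 4) (k : ℕ) (ω : Ω) :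
    erwv X (2 * p - 1) k ω ≤ (1 - (2 * p - 1) ^ 2)⁻¹ := by
  rw [erwv, div_eq_mul_inv]
  have h1 := erw_a2 hp hp'
  have h2 := erw_den h hp hp' k ω
  calc _ ≤ 1 * (1 - (2 * p - 1) ^ 2)⁻¹ :=
        mul_le_mul (erwx_sq h k ω) (inv_anti₀ h1 h2) (inv_nonneg.2 (by linarith)) zero_le_one
    _ = _ := one_mul _

lemma erwd_le (h : IsERW μ ℱ X p) (hp : 0 < p) (hp' : p < 3 / 4) (k : ℕ) (ω : Ω) :
    |erwd X (2 * p - 1) k ω| ≤ 2 * (1 - (2 * p - 1) ^ 2)⁻¹ := by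
  rw [erwd, div_eq_mul_inv, abs_mul, abs_mul]
  have h1 := erw_a2 hp hp'
  have h2 := erw_den h hp hp' k ω
  have h3 : |(1 - (2 * p - 1) ^ 2 * erwx X k ω ^ 2)⁻¹| ≤ (1 - (2 * p - 1) ^ 2)⁻¹ := by
    rw [abs_of_nonneg (inv_nonneg.2 (by linarith))]; exact inv_anti₀ h1 h2
  calc _ ≤ (1 * 2) * (1 - (2 * p - 1) ^ 2)⁻¹ :=
        mul_le_mul (mul_le_mul (erwx_abs h k ω) (abs_eps h hp hp' k ω) (abs_nonneg _) zero_le_one)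
          h3 (abs_nonneg _) (by norm_num)
    _ = _ := by ring

lemma aux_exp_lip (y : ℝ) : |1 - Real.exp y| ≤ |y| * Real.exp |y| := by
  rcases le_total 0 y with hy | hy
  · rw [abs_of_nonneg hy, abs_of_nonpos (by linarith [Real.add_one_le_exp y])]
    have h1 := Real.add_one_le_exp (-y)
    have h3 : Real.exp y * Real.exp (-y) = 1 := by rw [← Real.exp_add]; simp
    nlinarith [Real.exp_pos y]
  · rw [abs_of_nonpos hy, abs_of_nonneg (by linarith [Real.exp_le_one_iff.2 hy])]
    have h1 := Real.add_one_le_exp y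
    have h2 : 1 ≤ Real.exp (-y) := Real.one_le_exp (by linarith)
    nlinarith

/-- truncation indicator. -/
def erwI (X : ℕ → Ω → ℝ) (a N : ℝ) (k : ℕ) (ω : Ω) : ℝ :=
  open Classical in if ∑ j ∈ range (k + 1), erwv X a j ω ≤ N then 1 else 0

lemma erwI_BM (h : IsERW μ ℱ X p) (hp : 0 < p) (hp' : p < 3 / 4) (N : ℝ) (k : ℕ) :
    BM (ℱ k) (erwI X (2 * p - 1) N k) := by
  have hm : BM (ℱ k) (fun ω => ∑ j ∈ range (k + 1), erwv X (2 * p - 1) j ω) :=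
    BM.sum _ fun j hj => (erwv_BM h hp hp' j).mono
      (ℱ.mono (Nat.le_of_lt_succ (mem_range.1 hj)))
  refine ⟨?_, 1, fun ω => ?_⟩
  · exact Measurable.ite (measurableSet_le hm.1 measurable_const) measurable_const measurable_const
  · rw [erwI]; split_ifs <;> simp

lemma erwI_sq (a N : ℝ) (k : ℕ) (ω : Ω) : erwI X a N k ω ^ 2 = erwI X a N k ω := by
  rw [erwI]; split_ifs <;> simp

lemma erwI_cases (a N : ℝ) (k : ℕ) (ω : Ω) : erwI X a N k ω = 0 ∨ erwI X a N k ω = 1 := by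
  rw [erwI]; split_ifs <;> simp

lemma erwI_sum (h : IsERW μ ℱ X p) (hp : 0 < p) (hp' : p < 3 / 4) (N : ℝ) (hN : 0 ≤ N) (n : ℕ)
    (ω : Ω) : ∑ k ∈ range n, erwI X (2 * p - 1) N k ω * erwv X (2 * p - 1) k ω ≤ N := by
  induction n with
  | zero => simpa using hN
  | succ n ih =>
    by_cases hc : ∑ j ∈ range (n + 1), erwv X (2 * p - 1) j ω ≤ N
    · refine le_trans (Finset.sum_le_sum fun k _ => ?_) hc
      have := erwv_nonneg h hp hp' k ω
      rcases erwI_cases (X := X) (2 * p - 1) N k ω with e | e <;> rw [e] <;> linarith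
    · rw [Finset.sum_range_succ]
      have : erwI X (2 * p - 1) N n ω = 0 := by rw [erwI, if_neg hc]
      rw [this]; linarith

lemma erw_char (h : IsERW μ ℱ X p) (hp : 0 < p) (hp' : p < 3 / 4) (t s σ : ℝ) (hs : 0 < s)
    (hσ : 0 ≤ σ) (n : ℕ) (hη : |t| / s * (2 * (1 - (2 * p - 1) ^ 2)⁻¹) ≤ 1) :
    ‖∫ ω, Complex.exp ((t / s * erwP X (2 * p - 1) n ω : ℝ) * Complex.I) ∂μ
        - (Real.exp (-(t ^ 2 * σ / 2)) : ℂ)‖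
      ≤ 2 * Real.exp (t ^ 2 * (σ + 1) / 2) * (|t| / s * (2 * (1 - (2 * p - 1) ^ 2)⁻¹))
          * (t ^ 2 * (σ + 1))
        + (1 + Real.exp (t ^ 2 * (σ + 1) / 2) * (1 + t ^ 2)) *
          ∫ ω, |(∑ k ∈ range n, erwv X (2 * p - 1) k ω) / s ^ 2 - σ| ∂μ := by
  set A := (1 - (2 * p - 1) ^ 2)⁻¹ with hA
  have ha := erw_a2 hp hp'
  have hA1 : 1 ≤ A := by
    rw [hA]; exact (one_le_inv₀ ha).2 (by nlinarith [sq_nonneg (2 * p - 1)])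
  set η := |t| / s * (2 * A) with hηd
  have hη0 : 0 ≤ η := by positivity
  set N := (σ + 1) * s ^ 2 with hN
  have hN0 : 0 ≤ N := by positivity
  set K := t ^ 2 * (σ + 1) with hK
  set ι := erwI X (2 * p - 1) N with hι
  have hιB : ∀ k, BM (ℱ k) (ι k) := erwI_BM h hp hp' N
  have hι01 : ∀ k ω, ι k ω = 0 ∨ ι k ω = 1 := fun k ω => erwI_cases _ _ _ _
  set d : ℕ → Ω → ℝ := fun k ω => t / s * (ι k ω * erwd X (2 * p - 1) k ω) with hd
  set w : ℕ → Ω → ℝ := fun k ω => (t / s) ^ 2 * (ι k ω * erwv X (2 * p - 1) k ω) with hw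
  have hdB : ∀ k, BM (ℱ (k + 1)) (d k) := fun k =>
    (((hιB k).mono (ℱ.mono (Nat.le_succ k))).mul (erwd_BM h hp hp' k)).cmul _
  have hwB : ∀ k, BM (ℱ k) (w k) := fun k => ((hιB k).mul (erwv_BM h hp hp' k)).cmul _
  have hw0 : ∀ k ω, 0 ≤ w k ω := by
    intro k ω
    have := erwv_nonneg h hp hp' k ω
    simp only [hw]
    rcases hι01 k ω with e | e <;> rw [e] <;> positivity
  have hKs : ∀ n ω, ∑ k ∈ range n, w k ω ≤ K := by
    intro n ω
    simp only [hw]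
    rw [← Finset.mul_sum]
    calc _ ≤ (t / s) ^ 2 * N :=
          mul_le_mul_of_nonneg_left (erwI_sum h hp hp' N hN0 n ω) (sq_nonneg _)
      _ = K := by rw [hN, hK]; field_simp
  have hg' : ∀ (k : ℕ) (c : ℝ) (g : Ω → ℂ), Measurable[ℱ k] g → (∃ C, ∀ ω, ‖g ω‖ ≤ C) →
      Measurable[ℱ k] (fun ω => g ω * ((c * ι k ω : ℝ) : ℂ)) ∧
        (∃ C, ∀ ω, ‖g ω * ((c * ι k ω : ℝ) : ℂ)‖ ≤ C) := by
    intro k c g hg hC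
    obtain ⟨C, hC⟩ := hC
    refine ⟨hg.mul (Complex.measurable_ofReal.comp ((hιB k).cmul c).1), C * |c|, fun ω => ?_⟩
    rw [norm_mul, Complex.norm_real, Real.norm_eq_abs, abs_mul]
    refine mul_le_mul (hC ω) ?_ (by positivity) ((norm_nonneg _).trans (hC ω))
    rcases hι01 k ω with e | e <;> rw [e] <;> simp
  have hmain := aux_char μ ℱ d w η K hη0 hη (fun k => (hdB k).1) (fun k => (hwB k).1)
    (by
      intro k ω
      have := erwd_le h hp hp' k ω
      simp only [hd]
      rw [abs_mul, abs_div, abs_of_pos hs]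
      refine mul_le_mul_of_nonneg_left ?_ (by positivity)
      rcases hι01 k ω with e | e <;> rw [e]
      · simp; linarith
      · simpa using this)
    hw0
    (by
      intro k ω
      have h1 := erwv_le h hp hp' k ω
      have h2 : ι k ω * erwv X (2 * p - 1) k ω ≤ (2 * A) ^ 2 := by
        rcases hι01 k ω with e | e <;> rw [e] <;> nlinarith
      calc w k ω ≤ (t / s) ^ 2 * (2 * A) ^ 2 := mul_le_mul_of_nonneg_left h2 (sq_nonneg _)
        _ = η * η := by
            rw [hηd, ← sq_abs (t / s), abs_div, abs_of_pos hs]; ring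
        _ ≤ η := by nlinarith)
    hKs
    (by
      intro k g hg hC
      obtain ⟨q1, q2⟩ := hg' k (t / s) g hg hC
      rw [← erw_h1 h hp hp' k _ q1 q2]
      refine integral_congr_ae (Eventually.of_forall fun ω => ?_)
      simp only [hd]; push_cast; ring)
    (by
      intro k g hg hC
      obtain ⟨q1, q2⟩ := hg' k ((t / s) ^ 2) g hg hC
      rw [← erw_h2 h hp hp' k _ q1 q2]
      refine integral_congr_ae (Eventually.of_forall fun ω => ?_)
      have e : ((ι k ω : ℝ) : ℂ) ^ 2 = (ι k ω : ℂ) := by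
        rw [← Complex.ofReal_pow]; congr 1; exact erwI_sq _ _ _ _
      simp only [hd, hw]; push_cast
      linear_combination (g ω * ((t : ℂ) / s) ^ 2 * (erwd X (2 * p - 1) k ω : ℂ) ^ 2) * e)
    n
  set Z : Ω → ℂ := fun ω => Complex.exp ((∑ k ∈ range n, d k ω : ℝ) * Complex.I
        + ((∑ k ∈ range n, w k ω : ℝ) / 2 : ℝ)) with hZ
  set q : ℝ := Real.exp (-(t ^ 2 * σ / 2)) with hq
  have hq1 : q ≤ 1 := Real.exp_le_one_iff.2 (by have : 0 ≤ t ^ 2 * σ := by positivity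
                                                linarith)
  have hq0 : 0 ≤ q := (Real.exp_pos _).le
  set W : Ω → ℂ := fun ω => Complex.exp ((t / s * erwP X (2 * p - 1) n ω : ℝ) * Complex.I) with hW
  have hPB : BM m0 (fun ω => t / s * erwP X (2 * p - 1) n ω) := by
    simp only [erwP_eq]
    exact (BM.sum _ fun k _ => (erwd_BM h hp hp' k).mono (ℱ.le _)).cmul _
  have hWn : ∀ ω, ‖W ω‖ = 1 := fun ω => Complex.norm_exp_ofReal_mul_I _
  have hWi : Integrable W μ := aux_integrable μ W
    (Complex.measurable_exp.comp
      ((Complex.measurable_ofReal.comp hPB.1).mul_const _)).aestronglyMeasurable 1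
    (fun ω => (hWn ω).le)
  have hdS : BM m0 (fun ω => ∑ k ∈ range n, d k ω) :=
    BM.sum _ fun k _ => (hdB k).mono (ℱ.le _)
  have hwS : BM m0 (fun ω => ∑ k ∈ range n, w k ω) :=
    BM.sum _ fun k _ => (hwB k).mono (ℱ.le _)
  have hZn : ∀ ω, ‖Z ω‖ ≤ Real.exp (K / 2) := by
    intro ω
    simp only [hZ, Complex.norm_exp]
    refine Real.exp_le_exp.2 ?_
    have := hKs n ω
    simp only [Complex.add_re, Complex.re_ofReal_mul, Complex.I_re, Complex.ofReal_re]
    linarith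
  have hZi : Integrable Z μ := aux_integrable μ Z
    (Complex.measurable_exp.comp (((Complex.measurable_ofReal.comp hdS.1).mul_const _).add
      (Complex.measurable_ofReal.comp (hwS.1.div_const _)))).aestronglyMeasurable _ hZn
  set Y : Ω → ℝ := fun ω => (∑ k ∈ range n, erwv X (2 * p - 1) k ω) / s ^ 2 with hY
  have hYB : BM m0 (fun ω => Y ω - σ) :=
    ((BM.sum _ fun k _ => (erwv_BM h hp hp' k).mono (ℱ.le _)).divc _).sub (BM.const _)
  set E := Real.exp (K / 2) with hE
  have hE0 : 0 < E := Real.exp_pos _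
  have hpt : ∀ ω, ‖W ω - q * Z ω‖ ≤ (1 + E * (1 + t ^ 2)) * |Y ω - σ| := by
    intro ω
    have hv0 : ∀ k, 0 ≤ erwv X (2 * p - 1) k ω := fun k => erwv_nonneg h hp hp' k ω
    have hY0 : 0 ≤ Y ω := div_nonneg (Finset.sum_nonneg fun k _ => hv0 k) (by positivity)
    by_cases hc : ∑ k ∈ range n, erwv X (2 * p - 1) k ω ≤ N
    · have hι1 : ∀ k ∈ range n, ι k ω = 1 := by
        intro k hk
        have : ∑ j ∈ range (k + 1), erwv X (2 * p - 1) j ω ≤ N := by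
          refine le_trans (Finset.sum_le_sum_of_subset_of_nonneg ?_ fun j _ _ => hv0 j) hc
          exact Finset.range_subset_range.2 (Nat.succ_le_of_lt (mem_range.1 hk))
        simp only [hι, erwI]; rw [if_pos this]
      have e1 : ∑ k ∈ range n, d k ω = t / s * erwP X (2 * p - 1) n ω := by
        rw [erwP_eq, Finset.mul_sum]
        refine Finset.sum_congr rfl fun k hk => ?_
        simp only [hd]; rw [hι1 k hk, one_mul]
      have e2 : ∑ k ∈ range n, w k ω = t ^ 2 * Y ω := by
        have : t ^ 2 * Y ω = (t / s) ^ 2 * ∑ k ∈ range n, erwv X (2 * p - 1) k ω := by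
          simp only [hY]; field_simp
        rw [this, Finset.mul_sum]
        refine Finset.sum_congr rfl fun k hk => ?_
        simp only [hw]; rw [hι1 k hk, one_mul]
      have hYle : Y ω ≤ σ + 1 := by
        simp only [hY]; rw [div_le_iff₀ (by positivity)]; exact hc
      have e3 : W ω - q * Z ω = W ω * ((1 - Real.exp (t ^ 2 * (Y ω - σ) / 2) : ℝ) : ℂ) := by
        simp only [hW, hZ, hq]
        rw [e1, e2, Complex.exp_add]
        have : Real.exp (t ^ 2 * (Y ω - σ) / 2)
            = Real.exp (-(t ^ 2 * σ / 2)) * Real.exp (t ^ 2 * Y ω / 2) := by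
          rw [← Real.exp_add]; congr 1; ring
        rw [this, ← Complex.ofReal_exp (t ^ 2 * Y ω / 2)]
        push_cast
        ring
      rw [e3, norm_mul, hWn, one_mul, Complex.norm_real, Real.norm_eq_abs]
      have hab : |Y ω - σ| ≤ σ + 1 := abs_le.2 ⟨by linarith, by linarith⟩
      have hyb : |t ^ 2 * (Y ω - σ) / 2| = t ^ 2 / 2 * |Y ω - σ| := by
        rw [abs_div, abs_mul, abs_of_nonneg (sq_nonneg t)]; simp; ring
      have hyE : Real.exp |t ^ 2 * (Y ω - σ) / 2| ≤ E := by
        refine Real.exp_le_exp.2 ?_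
        rw [hyb, hK]; nlinarith [sq_nonneg t, mul_le_mul_of_nonneg_left hab (sq_nonneg t)]
      calc _ ≤ |t ^ 2 * (Y ω - σ) / 2| * Real.exp |t ^ 2 * (Y ω - σ) / 2| := aux_exp_lip _
        _ ≤ |t ^ 2 * (Y ω - σ) / 2| * E := mul_le_mul_of_nonneg_left hyE (abs_nonneg _)
        _ = (t ^ 2 / 2 * E) * |Y ω - σ| := by rw [hyb]; ring
        _ ≤ _ := by
          refine mul_le_mul_of_nonneg_right ?_ (abs_nonneg _)
          nlinarith [mul_nonneg hE0.le (sq_nonneg t)]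
    · have hYgt : 1 ≤ |Y ω - σ| := by
        have : σ + 1 ≤ Y ω := by
          simp only [hY]; rw [le_div_iff₀ (by positivity)]; exact (not_le.1 hc).le
        exact le_trans (by linarith) (le_abs_self _)
      have b1 : ‖W ω - q * Z ω‖ ≤ 1 + E := by
        refine (norm_sub_le _ _).trans ?_
        rw [hWn, norm_mul, Complex.norm_real, Real.norm_eq_abs, abs_of_nonneg hq0]
        have := mul_le_mul hq1 (hZn ω) (norm_nonneg _) zero_le_one
        linarith
      have b2 : 1 + E ≤ 1 + E * (1 + t ^ 2) := by nlinarith [mul_nonneg hE0.le (sq_nonneg t)]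
      have b3 : 0 ≤ 1 + E * (1 + t ^ 2) := by positivity
      nlinarith
  have hfin : ∫ ω, W ω ∂μ - (q : ℂ)
      = ∫ ω, (W ω - q * Z ω) ∂μ + q * (∫ ω, Z ω ∂μ - 1) := by
    rw [integral_sub hWi (hZi.const_mul _), integral_const_mul]; ring
  rw [hfin, add_comm]
  refine (norm_add_le _ _).trans (add_le_add ?_ ?_)
  · rw [norm_mul, Complex.norm_real, Real.norm_eq_abs, abs_of_nonneg hq0]
    calc _ ≤ 1 * ‖∫ ω, Z ω ∂μ - 1‖ := mul_le_mul_of_nonneg_right hq1 (norm_nonneg _)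
      _ ≤ _ := by rw [one_mul]; exact hmain
  · rw [← integral_const_mul]
    exact norm_integral_le_of_norm_le (hYB.int.abs.const_mul _) (Eventually.of_forall hpt)

end ERW4

lemma erw_charlim {m0 : MeasurableSpace Ω} {μ : Measure Ω} [IsProbabilityMeasure μ]
    {ℱ : Filtration ℕ m0} {X : ℕ → Ω → ℝ} {p : ℝ}
    (h : IsERW μ ℱ X p) (hp : 0 < p) (hp' : p < 3 / 4) (t : ℝ) :
    Tendsto (fun n : ℕ => ∫ ω, Complex.exp
        ((t / Real.sqrt (Real.log n) * erwP X (2 * p - 1) n ω : ℝ) * Complex.I) ∂μ)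
      atTop (𝓝 (Real.exp (-(t ^ 2 * (1 / (3 - 4 * p)) / 2)) : ℂ)) := by
  have hc : 0 < 3 - 4 * p := by linarith
  obtain ⟨C, hC⟩ := erw_L1 h hp hp'
  have hs : Tendsto (fun n : ℕ => Real.sqrt (Real.log n)) atTop atTop :=
    Real.tendsto_sqrt_atTop.comp (Real.tendsto_log_atTop.comp tendsto_natCast_atTop_atTop)
  set A := (1 - (2 * p - 1) ^ 2)⁻¹ with hA
  set σ := 1 / (3 - 4 * p) with hσ
  have hσ0 : 0 ≤ σ := by positivity
  have hη : Tendsto (fun n : ℕ => |t| / Real.sqrt (Real.log n) * (2 * A)) atTop (𝓝 0) := by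
    simpa using (hs.const_div_atTop |t|).mul_const (2 * A)
  have hCs : Tendsto (fun n : ℕ => C / Real.sqrt (Real.log n)) atTop (𝓝 0) := hs.const_div_atTop C
  rw [tendsto_iff_norm_sub_tendsto_zero]
  set Q := 1 + Real.exp (t ^ 2 * (σ + 1) / 2) * (1 + t ^ 2) with hQ
  have hQ0 : 0 ≤ Q := by positivity
  have hbound : Tendsto (fun n : ℕ => 2 * Real.exp (t ^ 2 * (σ + 1) / 2)
      * (|t| / Real.sqrt (Real.log n) * (2 * A)) * (t ^ 2 * (σ + 1))
      + Q * (C / Real.sqrt (Real.log n))) atTop (𝓝 0) := by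
    simpa using ((hη.const_mul (2 * Real.exp (t ^ 2 * (σ + 1) / 2))).mul_const
      (t ^ 2 * (σ + 1))).add (hCs.const_mul Q)
  refine squeeze_zero' (Eventually.of_forall fun n => norm_nonneg _) ?_ hbound
  filter_upwards [hη.eventually_le_const zero_lt_one, hs.eventually_gt_atTop 0,
    eventually_ge_atTop 3] with n h1 h2 h3
  refine (erw_char h hp hp' t _ σ h2 hσ0 n h1).trans ?_
  refine add_le_add le_rfl (mul_le_mul_of_nonneg_left ?_ hQ0)
  have hL : 0 < Real.log n := Real.sqrt_pos.1 h2
  have hsq : Real.sqrt (Real.log n) ^ 2 = Real.log n := Real.sq_sqrt hL.le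
  have e : ∀ ω, |(∑ k ∈ range n, erwv X (2 * p - 1) k ω) / Real.sqrt (Real.log n) ^ 2 - σ|
      = |∑ k ∈ range n, erwv X (2 * p - 1) k ω - Real.log n / (3 - 4 * p)| / Real.log n := by
    intro ω
    rw [hsq]
    conv_rhs => rw [← abs_of_pos hL, ← abs_div, abs_of_pos hL]
    congr 1
    rw [hσ]
    field_simp
  simp_rw [e]
  rw [integral_div, div_le_iff₀ hL]
  refine (hC n h3).trans (le_of_eq ?_)
  rw [div_mul_eq_mul_div, eq_div_iff h2.ne', mul_assoc, ← sq, hsq]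

/-- In the diffusive regime `0 < p < 3/4`, `P_n / √(log n)` converges in distribution
to the centered Gaussian law of variance `1/(3 - 4p)`. -/
theorem erw_score_clt_diffusive
    {m0 : MeasurableSpace Ω} (μ : Measure Ω) [IsProbabilityMeasure μ]
    (ℱ : Filtration ℕ m0) (X : ℕ → Ω → ℝ) (p : ℝ)
    (hERW : IsERW μ ℱ X p) (hp : 0 < p) (hp' : p < 3 / 4) :
    ∀ f : ℝ →ᵇ ℝ,
      Tendsto (fun n => ∫ ω, f (erwP X (2 * p - 1) n ω / Real.sqrt (Real.log n)) ∂μ)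
        atTop (𝓝 (∫ x, f x ∂(gaussianReal 0 ((1 / (3 - 4 * p)).toNNReal)))) := by
  have hc : 0 < 3 - 4 * p := by linarith
  set a := 2 * p - 1 with ha
  have hY : ∀ n : ℕ, Measurable (fun ω => erwP X a n ω / Real.sqrt (Real.log n)) := by
    intro n
    have : BM m0 (fun ω => erwP X a n ω / Real.sqrt (Real.log n)) := by
      simp only [erwP_eq]
      exact (BM.sum _ fun k _ => (erwd_BM hERW hp hp' k).mono (ℱ.le _)).divc _
    exact this.1
  let ν : ℕ → ProbabilityMeasure ℝ := fun n =>
    ⟨μ.map (fun ω => erwP X a n ω / Real.sqrt (Real.log n)),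
      Measure.isProbabilityMeasure_map (hY n).aemeasurable⟩
  let ν₀ : ProbabilityMeasure ℝ :=
    ⟨gaussianReal 0 ((1 / (3 - 4 * p)).toNNReal), inferInstance⟩
  have hlim : Tendsto ν atTop (𝓝 ν₀) := by
    refine ProbabilityMeasure.tendsto_iff_tendsto_charFun.2 fun t => ?_
    have h0 : charFun (ν₀ : Measure ℝ) t
        = (Real.exp (-(t ^ 2 * (1 / (3 - 4 * p)) / 2)) : ℂ) := by
      change charFun (gaussianReal 0 ((1 / (3 - 4 * p)).toNNReal)) t = _
      rw [charFun_gaussianReal, Complex.ofReal_exp]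
      congr 1
      rw [Real.coe_toNNReal _ (by positivity)]
      push_cast
      ring
    rw [h0]
    refine (erw_charlim hERW hp hp' t).congr fun n => ?_
    change _ = charFun (μ.map (fun ω => erwP X a n ω / Real.sqrt (Real.log n))) t
    rw [charFun_apply_real, integral_map (hY n).aemeasurable (by fun_prop)]
    refine integral_congr_ae (Eventually.of_forall fun ω => ?_)
    simp only
    congr 1
    push_cast
    ring
  intro f
  have := (ProbabilityMeasure.tendsto_iff_forall_integral_tendsto.1 hlim) f
  refine this.congr fun n => ?_
  change ∫ x, f x ∂(μ.map (fun ω => erwP X a n ω / Real.sqrt (Real.log n))) = _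
  rw [integral_map (hY n).aemeasurable f.continuous.aestronglyMeasurable]
end
end

section
/- In the critical regime p = 3/4, for every n ≥ 1 the second moment of the position is 𝔼[S_n²] = n·H_n, where H_n = Σ_{k=1}^n 1/k is the n-th harmonic number. -/
open MeasureTheory ProbabilityTheory Filter Finset
open scoped BoundedContinuousFunction ENNReal NNReal Topology

noncomputable section

variable {Ω : Type*}

/-- In the critical regime `p = 3/4`, `E[S_n²] = n H_n` where `H_n` is the `n`-th
harmonic number. -/
theorem erw_second_moment_critical
    {m0 : MeasurableSpace Ω} (μ : Measure Ω) [IsProbabilityMeasure μ]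
    (ℱ : Filtration ℕ m0) (X : ℕ → Ω → ℝ)
    (hERW : IsERW μ ℱ X (3 / 4)) :
    ∀ n, 1 ≤ n → ∫ ω, (erwS X n ω) ^ 2 ∂μ = n * ∑ k ∈ Finset.Icc 1 n, (1 : ℝ) / k := by
  obtain ⟨-, -, hval, hmeas, hcond⟩ := hERW
  have hXabs : ∀ n, 1 ≤ n → ∀ ω, |X n ω| ≤ 1 := by
    intro n hn ω
    rcases hval n hn ω with h | h <;> rw [h] <;> norm_num
  have hXint : ∀ n, 1 ≤ n → Integrable (X n) μ := by
    intro n hn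
    refine Integrable.of_bound (C := 1)
      ((hmeas n hn).mono (ℱ.le n) le_rfl).aestronglyMeasurable ?_
    exact ae_of_all _ fun ω => by simpa using hXabs n hn ω
  have hSmeas : ∀ n, Measurable[ℱ n] (erwS X n) := by
    intro n
    unfold erwS
    refine Finset.measurable_fun_sum _ fun k hk => ?_
    rw [Finset.mem_Icc] at hk
    exact (hmeas k hk.1).mono (ℱ.mono hk.2) le_rfl
  have hSabs : ∀ n ω, ‖erwS X n ω‖ ≤ n := by
    intro n ω
    unfold erwS
    refine (norm_sum_le _ _).trans ?_
    calc ∑ k ∈ Finset.Icc 1 n, ‖X k ω‖ ≤ ∑ k ∈ Finset.Icc 1 n, (1 : ℝ) := by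
          refine Finset.sum_le_sum fun k hk => ?_
          rw [Finset.mem_Icc] at hk
          simpa using hXabs k hk.1 ω
      _ = n := by simp
  have hSm0 : ∀ n, AEStronglyMeasurable (erwS X n) μ := fun n =>
    ((hSmeas n).mono (ℱ.le n) le_rfl).aestronglyMeasurable
  have hS2int : ∀ n, Integrable (fun ω => erwS X n ω ^ 2) μ := by
    intro n
    refine Integrable.of_bound (C := (n : ℝ) ^ 2) ((hSm0 n).pow 2) ?_
    refine ae_of_all _ fun ω => ?_
    rw [norm_pow]
    exact pow_le_pow_left₀ (norm_nonneg _) (hSabs n ω) 2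
  intro n hn
  induction n, hn using Nat.le_induction with
  | base =>
    have h : ∀ ω, erwS X 1 ω ^ 2 = 1 := by
      intro ω
      rcases hval 1 le_rfl ω with h | h <;> simp [erwS, h]
    simp [h]
  | succ n hn ih =>
    have hn0 : (n : ℝ) ≠ 0 := by positivity
    have hSX : Integrable (erwS X n * X (n + 1)) μ :=
      (hXint (n + 1) (by omega)).bdd_mul (hSm0 n) (ae_of_all _ (hSabs n))
    have hcross : ∫ ω, erwS X n ω * X (n + 1) ω ∂μ
        = (1 / (2 * n)) * ∫ ω, erwS X n ω ^ 2 ∂μ := by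
      have h1 := condExp_mul_of_stronglyMeasurable_left (μ := μ) (m := ℱ n)
        (hSmeas n).stronglyMeasurable hSX (hXint (n + 1) (by omega))
      have h2 := integral_condExp (μ := μ) (f := erwS X n * X (n + 1)) (ℱ.le n)
      rw [← integral_const_mul]
      refine h2.symm.trans (integral_congr_ae ?_)
      filter_upwards [h1, hcond n hn] with ω e1 e2
      rw [e1, Pi.mul_apply, e2]
      field_simp
      ring
    have hexp : ∀ ω, erwS X (n + 1) ω ^ 2
        = erwS X n ω ^ 2 + 2 * (erwS X n ω * X (n + 1) ω) + 1 := by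
      intro ω
      have hs : erwS X (n + 1) ω = erwS X n ω + X (n + 1) ω := by
        unfold erwS
        rw [Finset.sum_Icc_succ_top (by omega)]
      have hx : X (n + 1) ω ^ 2 = 1 := by
        rcases hval (n + 1) (by omega) ω with h | h <;> simp [h]
      rw [hs]
      linear_combination hx
    have hSX' : Integrable (fun ω => 2 * (erwS X n ω * X (n + 1) ω)) μ := hSX.const_mul 2
    have hsum : Integrable
        (fun ω => erwS X n ω ^ 2 + 2 * (erwS X n ω * X (n + 1) ω)) μ := (hS2int n).add hSX'
    simp_rw [hexp]
    rw [integral_add hsum (integrable_const _),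
      integral_add (hS2int n) hSX', integral_const_mul, hcross, ih,
      Finset.sum_Icc_succ_top (by omega)]
    have hn1 : (n : ℝ) + 1 ≠ 0 := by positivity
    simp only [integral_const, probReal_univ, smul_eq_mul]
    push_cast
    field_simp
end
end

section
/- For every integer n ≥ 1, the Gamma function satisfies the two-sided bound n + 1/4 < (Γ(n+1)/Γ(n+1/2))² < n + 1/2. -/
open Real.Wallis in
theorem gr_eq (n : ℕ) :
    (Real.Gamma ((n : ℝ) + 1) / Real.Gamma ((n : ℝ) + 1 / 2)) ^ 2
      = W n * (2 * n + 1) / Real.pi := by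
  induction n with
  | zero =>
    have h : (Real.Gamma (1 / 2)) ^ 2 = Real.pi := by
      rw [Real.Gamma_one_half_eq, Real.sq_sqrt Real.pi_pos.le]
    simp only [Nat.cast_zero, zero_add, div_pow, Real.Gamma_one, h]
    simp [W]
  | succ k ih =>
    have hk : (0 : ℝ) ≤ k := Nat.cast_nonneg k
    have h1 : Real.Gamma (((k + 1 : ℕ) : ℝ) + 1) = (k + 1) * Real.Gamma (k + 1) := by
      push_cast
      exact Real.Gamma_add_one (by positivity)
    have h2 : Real.Gamma (((k + 1 : ℕ) : ℝ) + 1 / 2) = (k + 1 / 2) * Real.Gamma (k + 1 / 2) := by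
      rw [← Real.Gamma_add_one (by positivity)]
      congr 1
      push_cast
      ring
    rw [h1, h2, mul_div_mul_comm, mul_pow, ih, W_succ]
    have := Real.pi_pos.ne'
    push_cast
    have a : (2 * (k : ℝ) + 1) ≠ 0 := by positivity
    have b : (2 * (k : ℝ) + 3) ≠ 0 := by positivity
    have c : ((k : ℝ) + 1 / 2) ≠ 0 := by positivity
    field_simp
    ring

open Real.Wallis in
theorem W_lt_succ (n : ℕ) : W n < W (n + 1) := by
  rw [W_succ]
  have hk : (0 : ℝ) ≤ n := Nat.cast_nonneg n
  apply lt_mul_of_one_lt_right (W_pos n)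
  rw [div_mul_div_comm, one_lt_div (by positivity)]
  nlinarith

open Real.Wallis in
theorem f_succ_lt (n : ℕ) :
    W (n + 1) * ((4 * ((n + 1 : ℕ) : ℝ) + 2) / (4 * ((n + 1 : ℕ) : ℝ) + 1))
      < W n * ((4 * (n : ℝ) + 2) / (4 * (n : ℝ) + 1)) := by
  rw [W_succ, mul_assoc]
  have hk : (0 : ℝ) ≤ n := Nat.cast_nonneg n
  apply mul_lt_mul_of_pos_left _ (W_pos n)
  push_cast
  rw [div_mul_div_comm, div_mul_div_comm, div_lt_div_iff₀ (by positivity) (by positivity)]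
  have : 0 < (2 * (n : ℝ) + 3) := by positivity
  nlinarith [mul_pos this this, mul_nonneg hk this.le]

open Real.Wallis Filter Topology in
theorem f_gt (n : ℕ) :
    Real.pi / 2 < W n * ((4 * (n : ℝ) + 2) / (4 * (n : ℝ) + 1)) := by
  have hanti : Antitone (fun n : ℕ => W n * ((4 * (n : ℝ) + 2) / (4 * (n : ℝ) + 1))) :=
    antitone_nat_of_succ_le fun n => (f_succ_lt n).le
  have hg : Tendsto (fun n : ℕ => (4 * (n : ℝ) + 2) / (4 * (n : ℝ) + 1)) atTop (𝓝 1) := by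
    have h1 : Tendsto (fun n : ℕ => 4 * (n : ℝ) + 1) atTop atTop :=
      tendsto_atTop_add_const_right _ _
        (tendsto_natCast_atTop_atTop.const_mul_atTop (by norm_num))
    have h2 := (tendsto_inv_atTop_zero.comp h1).const_add (1 : ℝ)
    rw [add_zero] at h2
    refine h2.congr fun n => ?_
    have : (4 * (n : ℝ) + 1) ≠ 0 := by positivity
    simp only [Function.comp]
    field_simp
    ring
  have hl := tendsto_W_nhds_pi_div_two.mul hg
  rw [mul_one] at hl
  exact (hanti.le_of_tendsto hl (n + 1)).trans_lt (f_succ_lt n)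

/-- For every integer `n ≥ 1`, `n + 1/4 < (Γ(n+1)/Γ(n+1/2))² < n + 1/2`. -/
theorem gamma_ratio_sq_bounds (n : ℕ) (hn : 1 ≤ n) :
    (n : ℝ) + 1 / 4 < (Real.Gamma ((n : ℝ) + 1) / Real.Gamma ((n : ℝ) + 1 / 2)) ^ 2 ∧
    (Real.Gamma ((n : ℝ) + 1) / Real.Gamma ((n : ℝ) + 1 / 2)) ^ 2 < (n : ℝ) + 1 / 2 := by
  rw [gr_eq]
  have hk : (0 : ℝ) ≤ n := Nat.cast_nonneg n
  have h1 := f_gt n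
  have h2 := (W_lt_succ n).trans_le (Real.Wallis.W_le (n + 1))
  rw [← mul_div_assoc, lt_div_iff₀ (by positivity)] at h1
  rw [lt_div_iff₀ Real.pi_pos, div_lt_iff₀ Real.pi_pos]
  constructor
  · nlinarith
  · nlinarith
end

section
/- In the superdiffusive regime 3/4 < p ≤ 1, assume that S_n/n^{2p−1} converges almost surely to a random variable L. Then (1/n^{4p−3})·Σ_{k=1}^{n} (S_k/k)² → L²/(4p−3) almost surely, and consequently V_n/n^{4p−3} → 4L²/(4p−3) almost surely as n → ∞. -/
open MeasureTheory ProbabilityTheory Filter Finset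
open scoped BoundedContinuousFunction ENNReal NNReal Topology

noncomputable section

variable {Ω : Type*}

lemma aux_ratio (c : ℝ) : Tendsto (fun n : ℕ => (((n + 1 : ℕ) : ℝ) ^ c - (n : ℝ) ^ c) /
    ((n + 1 : ℕ) : ℝ) ^ (c - 1)) atTop (𝓝 c) := by
  have h1 : HasDerivAt (fun x : ℝ => x ^ c) c 1 := by
    simpa using Real.hasDerivAt_rpow_const (x := (1 : ℝ)) (p := c) (Or.inl one_ne_zero)
  rw [hasDerivAt_iff_tendsto_slope] at h1
  have h2 : Tendsto (fun n : ℕ => (n : ℝ) / ((n : ℝ) + 1)) atTop (𝓝[≠] 1) := by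
    rw [tendsto_nhdsWithin_iff]
    refine ⟨tendsto_natCast_div_add_atTop 1, Eventually.of_forall fun n => ?_⟩
    have : (n : ℝ) + 1 ≠ 0 := by positivity
    simp only [Set.mem_compl_iff, Set.mem_singleton_iff]
    rw [div_eq_one_iff_eq this]
    simp
  refine (h1.comp h2).congr fun n => ?_
  have h0 : (0 : ℝ) < (n : ℝ) + 1 := by positivity
  have hpc : (0 : ℝ) < ((n : ℝ) + 1) ^ c := by positivity
  simp only [Function.comp, slope_def_field, Nat.cast_add, Nat.cast_one, Real.one_rpow]
  rw [Real.div_rpow (Nat.cast_nonneg n) h0.le, Real.rpow_sub_one h0.ne']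
  have e : (n : ℝ) / ((n : ℝ) + 1) - 1 = - (1 / ((n : ℝ) + 1)) := by
    field_simp; ring
  rw [e]
  field_simp
  ring

lemma aux_sum (u : ℕ → ℝ) (c l : ℝ) (hc : 0 < c)
    (hu : Tendsto (fun n : ℕ => u n / (n : ℝ) ^ (c - 1)) atTop (𝓝 l)) :
    Tendsto (fun n : ℕ => (∑ k ∈ Finset.Icc 1 n, u k) / (n : ℝ) ^ c) atTop (𝓝 (l / c)) := by
  set g : ℕ → ℝ := fun n => ((n + 1 : ℕ) : ℝ) ^ c - (n : ℝ) ^ c with hg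
  have gpos : ∀ n, 0 < g n := fun n => by
    have : (n : ℝ) ^ c < ((n + 1 : ℕ) : ℝ) ^ c :=
      Real.rpow_lt_rpow (Nat.cast_nonneg n) (by push_cast; linarith) hc
    simp only [hg]; linarith
  have gsum : ∀ n : ℕ, ∑ i ∈ Finset.range n, g i = (n : ℝ) ^ c := fun n => by
    simp only [hg]
    rw [Finset.sum_range_sub (fun i : ℕ => (i : ℝ) ^ c)]
    simp [Real.zero_rpow hc.ne']
  have ginf : Tendsto (fun n => ∑ i ∈ Finset.range n, g i) atTop atTop := by
    simp only [gsum]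
    exact (tendsto_rpow_atTop hc).comp tendsto_natCast_atTop_atTop
  have hratio : Tendsto (fun n : ℕ => u (n + 1) / g n) atTop (𝓝 (l / c)) := by
    refine ((hu.comp (tendsto_add_atTop_nat 1)).div (aux_ratio c) hc.ne').congr fun n => ?_
    have : (0 : ℝ) < ((n + 1 : ℕ) : ℝ) ^ (c - 1) := by positivity
    simp only [Function.comp, Pi.div_apply]
    exact div_div_div_cancel_right₀ this.ne' _ _
  have ho : (fun n => u (n + 1) - l / c * g n) =o[atTop] g := by
    rw [Asymptotics.isLittleO_iff_tendsto (fun n h => absurd h (gpos n).ne')]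
    have := hratio.sub_const (l / c)
    rw [sub_self] at this
    refine this.congr fun n => ?_
    have := (gpos n).ne'
    field_simp
  have hs := (ho.sum_range (fun n => (gpos n).le) ginf).tendsto_div_nhds_zero
  have hs2 := hs.add_const (l / c)
  rw [zero_add] at hs2
  refine hs2.congr' ?_
  filter_upwards [eventually_gt_atTop 0] with n hn
  have hn' : (0 : ℝ) < (n : ℝ) ^ c := by positivity
  rw [Finset.sum_sub_distrib, ← Finset.mul_sum, gsum]
  have : ∑ k ∈ Finset.Icc 1 n, u k = ∑ k ∈ Finset.range n, u (k + 1) := by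
    rw [Finset.range_eq_Ico, Finset.sum_Ico_add' u 0 n 1]
    rfl
  rw [this]
  field_simp
  ring

/-- In the superdiffusive regime `3/4 < p ≤ 1`, if `S_n / n^{2p-1} → L` almost surely,
then `(1/n^{4p-3}) ∑_{k=1}^n (S_k/k)² → L²/(4p-3)` and `V_n / n^{4p-3} → 4L²/(4p-3)`
almost surely. -/
theorem erw_Vn_superdiffusive
    {m0 : MeasurableSpace Ω} (μ : Measure Ω) [IsProbabilityMeasure μ]
    (ℱ : Filtration ℕ m0) (X : ℕ → Ω → ℝ) (p : ℝ)
    (hERW : IsERW μ ℱ X p) (hp : 3 / 4 < p) (L : Ω → ℝ)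
    (hL : ∀ᵐ ω ∂μ, Tendsto (fun n => erwS X n ω / (n : ℝ) ^ (2 * p - 1)) atTop (𝓝 (L ω))) :
    ∀ᵐ ω ∂μ,
      Tendsto (fun n : ℕ => (1 / (n : ℝ) ^ (4 * p - 3)) *
          ∑ k ∈ Finset.Icc 1 n, (erwS X k ω / k) ^ 2)
        atTop (𝓝 (L ω ^ 2 / (4 * p - 3))) ∧
      Tendsto (fun n : ℕ => erwV X n ω / (n : ℝ) ^ (4 * p - 3))
        atTop (𝓝 (4 * L ω ^ 2 / (4 * p - 3))) := by
  filter_upwards [hL] with ω hω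
  have hc : 0 < 4 * p - 3 := by linarith
  set c := 4 * p - 3 with hcdef
  set u : ℕ → ℝ := fun k => (erwS X k ω / k) ^ 2 with hu
  have h1 : Tendsto (fun n : ℕ => u n / (n : ℝ) ^ (c - 1)) atTop (𝓝 (L ω ^ 2)) := by
    refine (hω.pow 2).congr' ?_
    filter_upwards [eventually_gt_atTop 0] with n hn
    have hn0 : (0 : ℝ) < n := by exact_mod_cast hn
    have e : ((n : ℝ) ^ (2 * p - 1)) ^ 2 = (n : ℝ) ^ 2 * (n : ℝ) ^ (c - 1) := by
      rw [← Real.rpow_natCast, ← Real.rpow_natCast, ← Real.rpow_mul hn0.le, ← Real.rpow_add hn0]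
      congr 1
      push_cast
      rw [hcdef]; ring
    simp only [hu]
    rw [div_pow, div_pow, e, div_div]
  have h2 := aux_sum u c _ hc h1
  refine ⟨h2.congr fun n => by rw [one_div, inv_mul_eq_div], ?_⟩
  have h3 : Tendsto (fun n : ℕ => u n / (n : ℝ) ^ c) atTop (𝓝 0) := by
    have := h1.mul (tendsto_inv_atTop_nhds_zero_nat (𝕜 := ℝ))
    rw [mul_zero] at this
    refine this.congr' ?_
    filter_upwards [eventually_gt_atTop 0] with n hn
    have hn0 : (0 : ℝ) < n := by exact_mod_cast hn
    have : (0 : ℝ) < (n : ℝ) ^ c := by positivity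
    rw [Real.rpow_sub_one hn0.ne']
    field_simp
  have h4 := (h2.sub h3).const_mul 4
  rw [sub_zero, ← mul_div_assoc] at h4
  refine h4.congr' ?_
  filter_upwards [eventually_gt_atTop 0] with n hn
  obtain ⟨m, rfl⟩ : ∃ m, n = m + 1 := ⟨n - 1, by omega⟩
  simp only [erwV, Nat.add_sub_cancel]
  rw [Finset.sum_Icc_succ_top (by omega)]
  simp only [hu]
  ring
end
end
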